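/- Let A ⊆ B be a C*-subalgebra such that the positive cone A⁺ residually supports B, and let F ⊆ A⁺ be a subset that residually supports the C*-algebra A (with respect to the ideals of A). Assume that the set of restricted ideals of A is finite, or that the projections contained in F separate the restricted ideals of A (i.e. any two restricted ideals of A containing exactly the same projections of F are equal; this is automatic when F consists of projections). Then the following are equivalent: (1) every nonzero element of F is properly infinite in B; (2) B is purely infinite; (3) B is purely infinite and has the ideal property; (4) B is strongly purely infinite. -/

import Mathlib

/- Common definitions for C*-inclusions, ideals, Cuntz subequivalence,
   supporting/filling families and pure infiniteness. -/

namespace KM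

variable {B : Type*} [NonUnitalCStarAlgebra B] [PartialOrder B]

/-- `J` is a closed two-sided ideal of the C*-algebra `C` (given as a subset of `B`). -/
def IsIdealIn (C J : Set B) : Prop :=
  J ⊆ C ∧ IsClosed J ∧ (0 : B) ∈ J ∧ (∀ x ∈ J, ∀ y ∈ J, x + y ∈ J) ∧
    (∀ (c : ℂ), ∀ x ∈ J, c • x ∈ J) ∧ (∀ x ∈ J, ∀ c ∈ C, c * x ∈ J ∧ x * c ∈ J)

/-- `J` is a closed two-sided ideal of `B`. -/
def IsIdeal (J : Set B) : Prop := IsIdealIn Set.univ J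

/-- `A` is a C*-subalgebra of `B`: a closed `*`-subalgebra. -/
def IsSubCStar (A : Set B) : Prop :=
  IsClosed A ∧ (0 : B) ∈ A ∧ (∀ x ∈ A, ∀ y ∈ A, x + y ∈ A) ∧
    (∀ (c : ℂ), ∀ x ∈ A, c • x ∈ A) ∧ (∀ x ∈ A, ∀ y ∈ A, x * y ∈ A) ∧
    (∀ x ∈ A, star x ∈ A)

/-- The smallest closed two-sided ideal of the C*-algebra `C` containing `S`. -/
def idealGenIn (C S : Set B) : Set B := ⋂₀ {J : Set B | IsIdealIn C J ∧ S ⊆ J}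

/-- The smallest closed two-sided ideal of `B` containing `S`; for an ideal `I` of a
subalgebra `A` this is the induced ideal `BIB`. -/
def idealGen (S : Set B) : Set B := idealGenIn Set.univ S

/-- `I` is a restricted ideal of the subalgebra `A`, i.e. `I = J ∩ A` for an ideal `J` of `B`. -/
def IsRestricted (A I : Set B) : Prop := ∃ J : Set B, IsIdeal J ∧ I = J ∩ A

/-- `J` is an induced ideal of `B`: `J = BIB` for some ideal `I` of `A`. -/
def IsInduced (A J : Set B) : Prop := ∃ I : Set B, IsIdealIn A I ∧ J = idealGen I

/-- `A` separates ideals in `B`. -/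
def SeparatesIdeals (A : Set B) : Prop :=
  ∀ J₁ J₂ : Set B, IsIdeal J₁ → IsIdeal J₂ → J₁ ∩ A = J₂ ∩ A → J₁ = J₂

/-- Cuntz subequivalence `a ≼ b`. -/
def CuntzBelow (a b : B) : Prop :=
  ∀ ε : ℝ, 0 < ε → ∃ x : B, ‖a - star x * b * x‖ < ε

/-- `F` supports `B`. -/
def Supports (F : Set B) : Prop :=
  ∀ b : B, 0 ≤ b → b ≠ 0 → ∃ a ∈ F, a ≠ 0 ∧ CuntzBelow a b

/-- `F` residually supports the C*-algebra `C ⊆ B`: for every ideal `J` of `C`, the image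
of `F` in `C/J` supports `C/J`, phrased concretely via the distance to `J`. -/
def ResiduallySupportsIn (C F : Set B) : Prop :=
  ∀ J : Set B, IsIdealIn C J → ∀ b ∈ C, 0 ≤ b → b ∉ J →
    ∃ a ∈ F, a ∉ J ∧ ∀ ε : ℝ, 0 < ε → ∃ x ∈ C,
      Metric.infDist (a - star x * b * x) J < ε

/-- `F` residually supports `B`. -/
def ResiduallySupports (F : Set B) : Prop := ResiduallySupportsIn Set.univ F

/-- `x` lies in `aB = {a c : c ∈ B}`. -/
def MemRightMul (a x : B) : Prop := ∃ c : B, x = a * c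

/-- `a` is properly infinite in `B`. -/
def ProperlyInfinite (a : B) : Prop :=
  ∀ ε : ℝ, 0 < ε → ∃ x y : B, MemRightMul a x ∧ MemRightMul a y ∧
    ‖star x * x - a‖ ≤ ε ∧ ‖star y * y - a‖ ≤ ε ∧ ‖star x * y‖ ≤ ε

/-- `a` is infinite in `B`. -/
def InfiniteElt (a : B) : Prop :=
  ∃ b : B, 0 ≤ b ∧ b ≠ 0 ∧ ∀ ε : ℝ, 0 < ε → ∃ x y : B,
    MemRightMul a x ∧ MemRightMul a y ∧
    ‖star x * x - a‖ ≤ ε ∧ ‖star y * y - b‖ ≤ ε ∧ ‖star x * y‖ ≤ ε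

/-- The pair `a, b` is separated in `B`. -/
def SeparatedPair (a b : B) : Prop :=
  ∀ ε : ℝ, 0 < ε → ∃ x y : B, MemRightMul a x ∧ MemRightMul b y ∧
    ‖star x * x - a‖ ≤ ε ∧ ‖star y * y - b‖ ≤ ε ∧ ‖star x * y‖ ≤ ε

/-- A character of `B`: a nonzero multiplicative linear functional `B → ℂ`. -/
def IsCharacter (φ : B →ₗ[ℂ] ℂ) : Prop :=
  (∀ x y : B, φ (x * y) = φ x * φ y) ∧ φ ≠ 0

/-- `B` is purely infinite: it admits no characters and for nonzero positive `a, b`,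
`a ≼ b` iff `a` lies in the ideal generated by `b`. -/
def PurelyInfinite (B : Type*) [NonUnitalCStarAlgebra B] [PartialOrder B] : Prop :=
  (¬ ∃ φ : B →ₗ[ℂ] ℂ, IsCharacter φ) ∧
    ∀ a b : B, 0 ≤ a → a ≠ 0 → 0 ≤ b → b ≠ 0 → (CuntzBelow a b ↔ a ∈ idealGen {b})

/-- `p` is a projection. -/
def IsProjection (p : B) : Prop := star p = p ∧ p * p = p

/-- `B` has the ideal property: projections separate ideals. -/
def IdealProperty (B : Type*) [NonUnitalCStarAlgebra B] [PartialOrder B] : Prop :=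
  ∀ J₁ J₂ : Set B, IsIdeal J₁ → IsIdeal J₂ →
    (∀ p : B, IsProjection p → (p ∈ J₁ ↔ p ∈ J₂)) → J₁ = J₂

/-- `B` is strongly purely infinite: every pair of positive elements is separated. -/
def StronglyPurelyInfinite (B : Type*) [NonUnitalCStarAlgebra B] [PartialOrder B] : Prop :=
  ∀ a b : B, 0 ≤ a → 0 ≤ b → SeparatedPair a b

/-- `D` is a hereditary C*-subalgebra of `B`. -/
def IsHereditary (D : Set B) : Prop :=
  IsSubCStar D ∧ ∀ b d : B, d ∈ D → 0 ≤ b → b ≤ d → b ∈ D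

/-- `F` fills `B`. -/
def Fills (F : Set B) : Prop :=
  ∀ D : Set B, IsHereditary D → (∃ d ∈ D, d ≠ 0) →
    ∀ J : Set B, IsIdeal J → ¬ D ⊆ J →
      ∃ z : B, z ∉ J ∧ z * star z ∈ D ∧ star z * z ∈ F

/-- Closed linear span of a subset of `B`. -/
def closSpan (S : Set B) : Set B := closure ↑(Submodule.span ℂ S)

/-- The C*-inclusion `A ⊆ B` is symmetric. -/
def SymmetricInclusion (A : Set B) : Prop :=
  ∀ I : Set B, IsRestricted A I →
    closSpan {z : B | ∃ x ∈ I, ∃ b : B, z = x * b} =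
      closSpan {z : B | ∃ b : B, ∃ x ∈ I, z = b * x}

/-- `b` is a normaliser of `A` in `B`. -/
def IsNormalizer (A : Set B) (b : B) : Prop :=
  (∀ a ∈ A, b * a * star b ∈ A) ∧ (∀ a ∈ A, star b * a * b ∈ A)

/-- The inclusion `A ⊆ B` is nondegenerate: the closed span of `A·B` is `B`. -/
def Nondegenerate (A : Set B) : Prop :=
  closSpan {z : B | ∃ a ∈ A, ∃ b : B, z = a * b} = Set.univ

/-- The inclusion `A ⊆ B` is regular: nondegenerate and `B` is the closed linear span of
the normalisers of `A`. -/
def RegularInclusion (A : Set B) : Prop :=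
  Nondegenerate A ∧ closSpan {b : B | IsNormalizer A b} = Set.univ

end KM

open KM

variable {B : Type*} [NonUnitalCStarAlgebra B] [PartialOrder B] [StarOrderedRing B]

/-!
Fix positive `a`, `b`. If they are not separated in `B`, then for some `ε` they are not separated
up to `ε`, and by Zorn's lemma there is an ideal `K` maximal among those modulo which this remains
so. A contradiction arises as soon as `B ⧸ K` contains a nonzero projection `p` which absorbs the
positive elements of its ideal and has two orthogonal copies below a suitable positive element:
separation modulo the ideal generated by `p` can then be corrected, inside that ideal, to
separation modulo `K`.

If `B` is purely infinite with the ideal property, every nonzero quotient has such projections. If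
the elements of `F` are properly infinite, they are found in `F` when its projections separate the
restricted ideals. When there are finitely many restricted ideals, hence finitely many ideals of
`B`, take `f ∈ F` with image generating a minimal ideal of the quotient: two orthogonal copies of
`f` lie below a cut-down of `f`, and an isometry with nonzero defect projection comes out of this.
-/

open Filter Topology
open scoped ComplexStarModule

namespace KM

section Ideals

variable {C : Type*} [NonUnitalCStarAlgebra C] {K L : Set C} {x y : C}

namespace IsIdeal

lemma of_mul_mem (hclosed : IsClosed K) (hzero : (0 : C) ∈ K)
    (hadd : ∀ x ∈ K, ∀ y ∈ K, x + y ∈ K) (hsmul : ∀ c : ℂ, ∀ x ∈ K, c • x ∈ K)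
    (hleft : ∀ x ∈ K, ∀ c : C, c * x ∈ K) (hright : ∀ x ∈ K, ∀ c : C, x * c ∈ K) :
    IsIdeal K :=
  ⟨Set.subset_univ _, hclosed, hzero, hadd, hsmul, fun x hx c _ => ⟨hleft x hx c, hright x hx c⟩⟩

lemma isClosed (hK : IsIdeal K) : IsClosed K := hK.2.1

lemma zero_mem (hK : IsIdeal K) : (0 : C) ∈ K := hK.2.2.1

lemma add_mem (hK : IsIdeal K) (hx : x ∈ K) (hy : y ∈ K) : x + y ∈ K :=
  hK.2.2.2.1 x hx y hy

lemma smul_mem (hK : IsIdeal K) (c : ℂ) (hx : x ∈ K) : c • x ∈ K :=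
  hK.2.2.2.2.1 c x hx

lemma real_smul_mem (hK : IsIdeal K) (c : ℝ) (hx : x ∈ K) : c • x ∈ K := by
  simpa using hK.smul_mem (c : ℂ) hx

lemma mul_mem_left (hK : IsIdeal K) (c : C) (hx : x ∈ K) : c * x ∈ K :=
  (hK.2.2.2.2.2 x hx c (Set.mem_univ c)).1

lemma mul_mem_right (hK : IsIdeal K) (c : C) (hx : x ∈ K) : x * c ∈ K :=
  (hK.2.2.2.2.2 x hx c (Set.mem_univ c)).2

lemma sub_mem (hK : IsIdeal K) (hx : x ∈ K) (hy : y ∈ K) : x - y ∈ K := by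
  simpa [sub_eq_add_neg] using hK.add_mem hx (hK.smul_mem (-1) hy)

lemma nonempty (hK : IsIdeal K) : K.Nonempty := ⟨0, hK.zero_mem⟩

lemma mem_of_forall_norm_sub_lt (hK : IsIdeal K)
    (h : ∀ ε : ℝ, 0 < ε → ∃ k ∈ K, ‖x - k‖ < ε) : x ∈ K :=
  hK.isClosed.closure_eq ▸ Metric.mem_closure_iff.2 fun ε hε => by
    simpa only [dist_eq_norm] using h ε hε

lemma singleton_zero : IsIdeal ({0} : Set C) := by
  refine of_mul_mem isClosed_singleton rfl ?_ ?_ ?_ ?_ <;> simp +contextual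

lemma sInter {S : Set (Set C)} (hS : ∀ K ∈ S, IsIdeal K) : IsIdeal (⋂₀ S) :=
  of_mul_mem (isClosed_sInter fun K hK => (hS K hK).isClosed)
    (fun K hK => (hS K hK).zero_mem)
    (fun _ hx _ hy K hK => (hS K hK).add_mem (hx K hK) (hy K hK))
    (fun c _ hx K hK => (hS K hK).smul_mem c (hx K hK))
    (fun _ hx c K hK => (hS K hK).mul_mem_left c (hx K hK))
    (fun _ hx c K hK => (hS K hK).mul_mem_right c (hx K hK))

lemma inter (hK : IsIdeal K) (hL : IsIdeal L) : IsIdeal (K ∩ L) := by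
  rw [← Set.sInter_pair]
  exact sInter (by rintro _ (rfl | rfl) <;> assumption)

lemma closure (hzero : (0 : C) ∈ K)
    (hadd : ∀ x ∈ K, ∀ y ∈ K, x + y ∈ K) (hsmul : ∀ c : ℂ, ∀ x ∈ K, c • x ∈ K)
    (hleft : ∀ x ∈ K, ∀ c : C, c * x ∈ K) (hright : ∀ x ∈ K, ∀ c : C, x * c ∈ K) :
    IsIdeal (closure K) :=
  of_mul_mem isClosed_closure (subset_closure hzero)
    (fun _ hx _ hy => map_mem_closure₂ continuous_add hx hy hadd)
    (fun c _ hx => map_mem_closure (continuous_const_smul c) hx (hsmul c))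
    (fun _ hx c => map_mem_closure (continuous_const_mul c) hx fun x hx => hleft x hx c)
    (fun _ hx c => map_mem_closure (f := (· * c)) (continuous_mul_const c) hx
      fun x hx => hright x hx c)

lemma closure_sUnion_of_isChain {S : Set (Set C)} (hne : S.Nonempty)
    (hchain : IsChain (· ⊆ ·) S) (hS : ∀ K ∈ S, IsIdeal K) : IsIdeal (_root_.closure (⋃₀ S)) := by
  obtain ⟨K₀, hK₀⟩ := hne
  refine closure ⟨K₀, hK₀, (hS K₀ hK₀).zero_mem⟩ ?_ ?_ ?_ ?_
  · rintro x ⟨K, hK, hx⟩ y ⟨L, hL, hy⟩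
    rcases hchain.total hK hL with h | h
    · exact ⟨L, hL, (hS L hL).add_mem (h hx) hy⟩
    · exact ⟨K, hK, (hS K hK).add_mem hx (h hy)⟩
  · rintro c x ⟨K, hK, hx⟩; exact ⟨K, hK, (hS K hK).smul_mem c hx⟩
  · rintro x ⟨K, hK, hx⟩ c; exact ⟨K, hK, (hS K hK).mul_mem_left c hx⟩
  · rintro x ⟨K, hK, hx⟩ c; exact ⟨K, hK, (hS K hK).mul_mem_right c hx⟩

end IsIdeal

lemma isIdeal_idealGen (S : Set C) : IsIdeal (idealGen S) :=
  IsIdeal.sInter fun _ hK => hK.1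

lemma mem_idealGen_self (a : C) : a ∈ idealGen {a} := fun _ hK => hK.2 rfl

lemma idealGen_singleton_subset (hK : IsIdeal K) (hx : x ∈ K) : idealGen {x} ⊆ K :=
  Set.sInter_subset_of_mem ⟨hK, by simpa using hx⟩

end Ideals

section ApproximateUnit

variable {C : Type*} [NonUnitalCStarAlgebra C] {K : Set C} {x : C}

/-- The largest `*`-subalgebra contained in an ideal. It is all of the ideal
(`IsIdeal.star_mem`), but that is proved through an approximate unit of this subalgebra. -/
def IsIdeal.starSubalgebra (hK : IsIdeal K) : NonUnitalStarSubalgebra ℂ C where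
  carrier := {x | x ∈ K ∧ star x ∈ K}
  add_mem' hx hy := ⟨hK.add_mem hx.1 hy.1, by simpa using hK.add_mem hx.2 hy.2⟩
  zero_mem' := ⟨hK.zero_mem, by simpa using hK.zero_mem⟩
  mul_mem' hx hy :=
    ⟨hK.mul_mem_left _ hy.1, by simpa using hK.mul_mem_left _ hx.2⟩
  smul_mem' c x hx := ⟨hK.smul_mem c hx.1, by simpa using hK.smul_mem (star c) hx.2⟩
  star_mem' hx := ⟨hx.2, by simpa using hx.1⟩

lemma IsIdeal.isClosed_starSubalgebra (hK : IsIdeal K) : IsClosed (hK.starSubalgebra : Set C) :=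
  hK.isClosed.inter (hK.isClosed.preimage continuous_star)

/-- The conjugate `(1 - u) d (1 - u)`, multiplied out because `C` need not have a unit. -/
def oneSubConj (u d : C) : C := d - u * d - d * u + u * d * u

lemma inr_oneSubConj (u d : C) :
    ((oneSubConj u d : C) : Unitization ℂ C) = (1 - u) * d * (1 - u) := by
  simp only [oneSubConj, Unitization.inr_add, Unitization.inr_sub, Unitization.inr_mul]
  noncomm_ring

lemma oneSubConj_add (u d e : C) : oneSubConj u (d + e) = oneSubConj u d + oneSubConj u e := by
  simp only [oneSubConj]; noncomm_ring

lemma oneSubConj_sub (u d e : C) : oneSubConj u (d - e) = oneSubConj u d - oneSubConj u e := by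
  simp only [oneSubConj]; noncomm_ring

lemma star_sub_mul_mul_sub_mul {u : C} (hu : IsSelfAdjoint u) (x y : C) :
    star (x - x * u) * (y - y * u) = oneSubConj u (star x * y) := by
  simp only [oneSubConj, star_sub, star_mul, hu.star_eq]; noncomm_ring

section Order

variable [PartialOrder C] [StarOrderedRing C] {u : C}

lemma oneSubConj_mono (hu : IsSelfAdjoint u) {d e : C} (hde : d ≤ e) :
    oneSubConj u d ≤ oneSubConj u e := by
  rw [← sub_nonneg, ← oneSubConj_sub, ← CFC.sqrt_mul_sqrt_self (e - d) (sub_nonneg.2 hde)]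
  nth_rw 1 [← (IsSelfAdjoint.of_nonneg (CFC.sqrt_nonneg (e - d))).star_eq]
  rw [← star_sub_mul_mul_sub_mul hu]
  exact star_mul_self_nonneg _

lemma norm_one_sub_inr_le_one (hu : 0 ≤ u) (hu1 : ‖u‖ ≤ 1) :
    ‖(1 - u : Unitization ℂ C)‖ ≤ 1 := by
  have hu0 : 0 ≤ (u : Unitization ℂ C) := Unitization.inr_nonneg_iff.2 hu
  have hu1 : (u : Unitization ℂ C) ≤ 1 :=
    (CStarAlgebra.norm_le_one_iff_of_nonneg _ hu0).1 (by rwa [Unitization.norm_inr])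
  exact (CStarAlgebra.norm_le_one_iff_of_nonneg _ (sub_nonneg.2 hu1)).2 (sub_le_self _ hu0)

lemma norm_sub_mul_le (hu : 0 ≤ u) (hu1 : ‖u‖ ≤ 1) (x : C) : ‖x - x * u‖ ≤ ‖x‖ := by
  have h := norm_mul_le (x : Unitization ℂ C) (1 - u)
  rw [mul_sub, mul_one, ← Unitization.inr_mul, ← Unitization.inr_sub, Unitization.norm_inr,
    Unitization.norm_inr] at h
  exact h.trans (mul_le_of_le_one_right (norm_nonneg _) (norm_one_sub_inr_le_one hu hu1))

lemma norm_oneSubConj_le (hu : 0 ≤ u) (hu1 : ‖u‖ ≤ 1) (d : C) : ‖oneSubConj u d‖ ≤ ‖d‖ := by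
  have h1 := norm_one_sub_inr_le_one hu hu1
  rw [← Unitization.norm_inr (𝕜 := ℂ), inr_oneSubConj, ← Unitization.norm_inr (𝕜 := ℂ) d]
  exact (norm_mul₃_le ..).trans <| mul_le_of_le_one_right (by positivity) h1 |>.trans <|
    mul_le_of_le_one_left (norm_nonneg _) h1

lemma norm_oneSubConj_le_norm_sub_mul (hu : 0 ≤ u) (hu1 : ‖u‖ ≤ 1) (d : C) :
    ‖oneSubConj u d‖ ≤ ‖d - d * u‖ := by
  rw [← norm_star, ← norm_star (d - _)]
  refine le_trans (le_of_eq ?_) (norm_sub_mul_le hu hu1 _)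
  congr 1
  simp only [oneSubConj, star_add, star_sub, star_mul, (IsSelfAdjoint.of_nonneg hu).star_eq]
  noncomm_ring

lemma norm_sub_mul_sq_le (hu : 0 ≤ u) (hu1 : ‖u‖ ≤ 1) (x : C) :
    ‖x - x * u‖ ^ 2 ≤ ‖star x * x - star x * x * u‖ := by
  rw [sq, ← CStarRing.norm_star_mul_self, star_sub_mul_mul_sub_mul (.of_nonneg hu)]
  exact norm_oneSubConj_le_norm_sub_mul hu hu1 _

lemma IsIdeal.exists_right_approximateUnit (hK : IsIdeal K) :
    ∃ F : Filter C, F.NeBot ∧ (∀ᶠ u in F, u ∈ K ∧ 0 ≤ u ∧ ‖u‖ ≤ 1) ∧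
      ∀ x ∈ K, Tendsto (x * ·) F (𝓝 x) := by
  let N := hK.starSubalgebra
  have hNclosed : IsClosed (N : Set C) := hK.isClosed_starSubalgebra
  let : PartialOrder N := CStarAlgebra.spectralOrder N
  have : StarOrderedRing N := CStarAlgebra.spectralOrderedRing N
  have hunit := CStarAlgebra.increasingApproximateUnit N
  have hneBot := hunit.neBot
  have hbound : ∀ᶠ u : C in (CStarAlgebra.approximateUnit N).map (↑), u ∈ K ∧ 0 ≤ u ∧ ‖u‖ ≤ 1 := by
    rw [eventually_map]
    filter_upwards [hunit.eventually_nonneg, hunit.eventually_norm] with u hu0 hu1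
    refine ⟨u.2.1, ?_, hu1⟩
    obtain ⟨v, rfl⟩ := CStarAlgebra.nonneg_iff_eq_star_mul_self.1 hu0
    exact star_mul_self_nonneg (v : C)
  refine ⟨(CStarAlgebra.approximateUnit N).map (↑), inferInstance, hbound, fun x hx => ?_⟩
  let m : N := ⟨star x * x, hK.mul_mem_left _ hx, by simpa using hK.mul_mem_left _ hx⟩
  have hm : Tendsto (fun u : C => ‖star x * x - star x * x * u‖)
      ((CStarAlgebra.approximateUnit N).map (↑)) (𝓝 0) := by
    rw [tendsto_map'_iff]
    have := (tendsto_const_nhds (x := m)).sub (hunit.tendsto_mul_left m)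
    rw [sub_self] at this
    exact this.norm.trans (by simp)
  rw [tendsto_iff_norm_sub_tendsto_zero]
  have hsq : Tendsto (fun u : C => ‖x * u - x‖ ^ 2)
      ((CStarAlgebra.approximateUnit N).map (↑)) (𝓝 0) := by
    refine squeeze_zero' (.of_forall fun u => by positivity) ?_ hm
    filter_upwards [hbound] with u ⟨_, hu0, hu1⟩
    rw [norm_sub_rev]
    exact norm_sub_mul_sq_le hu0 hu1 x
  simpa using hsq.sqrt

end Order

lemma IsIdeal.star_mem (hK : IsIdeal K) (hx : x ∈ K) : star x ∈ K := by
  let : PartialOrder C := CStarAlgebra.spectralOrder C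
  have : StarOrderedRing C := CStarAlgebra.spectralOrderedRing C
  obtain ⟨F, _, hF, hlim⟩ := hK.exists_right_approximateUnit
  refine hK.isClosed.mem_of_tendsto ((hlim x hx).star) ?_
  filter_upwards [hF] with u ⟨huK, hu0, _⟩
  rw [star_mul, (IsSelfAdjoint.of_nonneg hu0).star_eq]
  exact hK.mul_mem_right _ huK

/-- The filter `F` is a two-sided approximate unit of the ideal `K` consisting of positive
contractions. -/
structure IsApproximateUnitOf [PartialOrder C] (F : Filter C) (K : Set C) : Prop where
  neBot : F.NeBot
  eventually : ∀ᶠ u in F, u ∈ K ∧ 0 ≤ u ∧ ‖u‖ ≤ 1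
  tendsto_left : ∀ x ∈ K, Tendsto (x * ·) F (𝓝 x)
  tendsto_right : ∀ x ∈ K, Tendsto (· * x) F (𝓝 x)

lemma IsIdeal.exists_isApproximateUnitOf [PartialOrder C] [StarOrderedRing C] (hK : IsIdeal K) :
    ∃ F : Filter C, IsApproximateUnitOf F K := by
  obtain ⟨F, hne, hF, hlim⟩ := hK.exists_right_approximateUnit
  refine ⟨F, hne, hF, hlim, fun x hx => ?_⟩
  have h := (hlim _ (hK.star_mem hx)).star
  rw [star_star] at h
  refine h.congr' ?_
  filter_upwards [hF] with u ⟨_, hu0, _⟩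
  rw [star_mul, star_star, (IsSelfAdjoint.of_nonneg hu0).star_eq]

lemma IsApproximateUnitOf.eventually_norm_oneSubConj_lt [PartialOrder C] [StarOrderedRing C]
    {F : Filter C} (hF : IsApproximateUnitOf F K) {z : C} {ε : ℝ}
    (hz : z ∈ Metric.thickening ε K) : ∀ᶠ u in F, ‖oneSubConj u z‖ < ε := by
  obtain ⟨k, hk, hzk⟩ := Metric.mem_thickening_iff.1 hz
  rw [dist_eq_norm] at hzk
  have hlim : Tendsto (fun u => ‖z - k‖ + ‖k - k * u‖) F (𝓝 ‖z - k‖) := by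
    simpa using ((hF.tendsto_left k hk).const_sub k).norm.const_add ‖z - k‖
  filter_upwards [hF.eventually, hlim.eventually_lt_const hzk] with u ⟨_, hu0, hu1⟩ hu
  rw [← sub_add_cancel z k, oneSubConj_add]
  exact (norm_add_le _ _).trans (add_le_add (norm_oneSubConj_le hu0 hu1 _)
    (norm_oneSubConj_le_norm_sub_mul hu0 hu1 k)) |>.trans_lt hu

end ApproximateUnit

section Quotient

variable {C : Type*} [NonUnitalCStarAlgebra C] {K : Set C}

namespace IsIdeal

/-- A closed two-sided ideal as a linear subspace, the input of Mathlib's quotient norm. -/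
def toSubmodule (hK : IsIdeal K) : Submodule ℂ C where
  carrier := K
  add_mem' := hK.add_mem
  zero_mem' := hK.zero_mem
  smul_mem' c _ hx := hK.smul_mem c hx

/-- The quotient C*-algebra `C/K`. It carries the spectral order, which makes it a
`StarOrderedRing`. -/
def Quotient (hK : IsIdeal K) : Type _ := C ⧸ hK.toSubmodule

variable (hK : IsIdeal K)

instance : IsClosed (hK.toSubmodule : Set C) := hK.isClosed

noncomputable instance : NormedAddCommGroup hK.Quotient :=
  inferInstanceAs (NormedAddCommGroup (C ⧸ hK.toSubmodule))

noncomputable instance : NormedSpace ℂ hK.Quotient :=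
  inferInstanceAs (NormedSpace ℂ (C ⧸ hK.toSubmodule))

instance : CompleteSpace hK.Quotient :=
  inferInstanceAs (CompleteSpace (C ⧸ hK.toSubmodule))

/-- The quotient map as a linear map, until the multiplication of `C/K` is available. -/
noncomputable def mkₗ : C →ₗ[ℂ] hK.Quotient := hK.toSubmodule.mkQ

lemma mkₗ_surjective : Function.Surjective hK.mkₗ := hK.toSubmodule.mkQ_surjective

lemma mkₗ_eq_iff {x y : C} : hK.mkₗ x = hK.mkₗ y ↔ x - y ∈ K :=
  Submodule.Quotient.eq hK.toSubmodule

lemma norm_mkₗ (x : C) : ‖hK.mkₗ x‖ = Metric.infDist x K :=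
  QuotientAddGroup.norm_mk (S := hK.toSubmodule.toAddSubgroup) x

lemma norm_mkₗ_lt_iff {x : C} {r : ℝ} : ‖hK.mkₗ x‖ < r ↔ ∃ k ∈ K, ‖x - k‖ < r := by
  simp only [norm_mkₗ, Metric.infDist_lt_iff hK.nonempty, dist_eq_norm]

lemma norm_mkₗ_le {x k : C} (hk : k ∈ K) : ‖hK.mkₗ x‖ ≤ ‖x - k‖ := by
  rw [norm_mkₗ, ← dist_eq_norm]
  exact Metric.infDist_le_dist_of_mem hk

instance : Mul hK.Quotient where
  mul := Quotient.map₂ (· * ·) fun a b h a' b' h' => hK.toSubmodule.quotientRel_def.2 <| by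
    have hsplit : a * a' - b * b' = (a - b) * a' + b * (a' - b') := by noncomm_ring
    exact hsplit ▸ hK.add_mem (hK.mul_mem_right _ (hK.toSubmodule.quotientRel_def.1 h))
      (hK.mul_mem_left _ (hK.toSubmodule.quotientRel_def.1 h'))

instance : Star hK.Quotient where
  star := Quotient.map star fun a b h => hK.toSubmodule.quotientRel_def.2 <|
    star_sub a b ▸ hK.star_mem (hK.toSubmodule.quotientRel_def.1 h)

lemma mkₗ_mul (x y : C) : hK.mkₗ (x * y) = hK.mkₗ x * hK.mkₗ y := rfl

lemma mkₗ_star (x : C) : hK.mkₗ (star x) = star (hK.mkₗ x) := rfl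

lemma norm_mkₗ_mul_le (x y : C) : ‖hK.mkₗ x * hK.mkₗ y‖ ≤ ‖hK.mkₗ x‖ * ‖hK.mkₗ y‖ := by
  refine le_mul_of_forall_lt₀ fun r hr s hs => ?_
  obtain ⟨k, hk, hxk⟩ := hK.norm_mkₗ_lt_iff.1 hr
  obtain ⟨l, hl, hyl⟩ := hK.norm_mkₗ_lt_iff.1 hs
  have hkl : k * y + x * l - k * l ∈ K :=
    hK.sub_mem (hK.add_mem (hK.mul_mem_right _ hk) (hK.mul_mem_left _ hl)) (hK.mul_mem_left _ hl)
  calc ‖hK.mkₗ (x * y)‖ ≤ ‖x * y - (k * y + x * l - k * l)‖ := hK.norm_mkₗ_le hkl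
    _ = ‖(x - k) * (y - l)‖ := by congr 1; noncomm_ring
    _ ≤ ‖x - k‖ * ‖y - l‖ := norm_mul_le _ _
    _ ≤ r * s := by gcongr; exact (norm_nonneg _).trans hxk.le

-- For an approximate unit `u` of `K`, `‖x - x u‖² = ‖(1 - u) (x* x) (1 - u)‖` tends to the distance
-- of `x* x` from `K`.
lemma norm_mkₗ_sq_le (x : C) : ‖hK.mkₗ x‖ ^ 2 ≤ ‖hK.mkₗ (star x * x)‖ := by
  let : PartialOrder C := CStarAlgebra.spectralOrder C
  have : StarOrderedRing C := CStarAlgebra.spectralOrderedRing C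
  refine le_of_forall_gt_imp_ge_of_dense fun r hr => ?_
  obtain ⟨k, hk, hxk⟩ := hK.norm_mkₗ_lt_iff.1 hr
  obtain ⟨F, hF⟩ := hK.exists_isApproximateUnitOf
  have := hF.neBot
  obtain ⟨u, ⟨huK, hu0, _⟩, hur⟩ := (hF.eventually.and (hF.eventually_norm_oneSubConj_lt
    (Metric.mem_thickening_iff.2 ⟨k, hk, (dist_eq_norm _ _).trans_lt hxk⟩))).exists
  calc ‖hK.mkₗ x‖ ^ 2 ≤ ‖x - x * u‖ ^ 2 := by gcongr; exact hK.norm_mkₗ_le (hK.mul_mem_left _ huK)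
    _ = ‖oneSubConj u (star x * x)‖ := by
      rw [sq, ← CStarRing.norm_star_mul_self, star_sub_mul_mul_sub_mul (.of_nonneg hu0)]
    _ ≤ r := hur.le

noncomputable instance : NonUnitalCStarAlgebra hK.Quotient where
  toNorm := inferInstance
  left_distrib := hK.mkₗ_surjective.forall₃.2 fun x y z => by
    simp only [← mkₗ_mul, ← map_add, mul_add]
  right_distrib := hK.mkₗ_surjective.forall₃.2 fun x y z => by
    simp only [← mkₗ_mul, ← map_add, add_mul]
  zero_mul := hK.mkₗ_surjective.forall.2 fun x => by
    rw [← map_zero hK.mkₗ, ← mkₗ_mul, zero_mul]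
  mul_zero := hK.mkₗ_surjective.forall.2 fun x => by
    rw [← map_zero hK.mkₗ, ← mkₗ_mul, mul_zero]
  mul_assoc := hK.mkₗ_surjective.forall₃.2 fun x y z => by simp only [← mkₗ_mul, mul_assoc]
  dist_eq x y := by rw [dist_eq_norm, norm_sub_rev, sub_eq_neg_add]
  norm_mul_le := hK.mkₗ_surjective.forall₂.2 hK.norm_mkₗ_mul_le
  star_involutive := hK.mkₗ_surjective.forall.2 fun x => by simp only [← mkₗ_star, star_star]
  star_mul := hK.mkₗ_surjective.forall₂.2 fun x y => by
    simp only [← mkₗ_mul, ← mkₗ_star, star_mul]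
  star_add := hK.mkₗ_surjective.forall₂.2 fun x y => by
    simp only [← map_add, ← mkₗ_star, star_add]
  norm_mul_self_le := hK.mkₗ_surjective.forall.2 fun x => by
    rw [← sq]; exact hK.norm_mkₗ_sq_le x
  smul_zero := smul_zero
  smul_add := smul_add
  add_smul := add_smul
  zero_smul := zero_smul ℂ
  norm_smul_le := norm_smul_le
  smul_assoc c := hK.mkₗ_surjective.forall₂.2 fun x y => by
    simp only [smul_eq_mul, ← map_smul, ← mkₗ_mul, smul_mul_assoc]
  smul_comm c := hK.mkₗ_surjective.forall₂.2 fun x y => by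
    simp only [smul_eq_mul, ← map_smul, ← mkₗ_mul, mul_smul_comm]
  star_smul c := hK.mkₗ_surjective.forall.2 fun x => by
    simp only [← map_smul, ← mkₗ_star, star_smul]

noncomputable instance : PartialOrder hK.Quotient := CStarAlgebra.spectralOrder _

instance : StarOrderedRing hK.Quotient := CStarAlgebra.spectralOrderedRing _

/-- The quotient map `C → C/K`. -/
noncomputable def mk : C →⋆ₙₐ[ℂ] hK.Quotient where
  toFun := hK.mkₗ
  map_smul' := map_smul _
  map_zero' := map_zero _
  map_add' := map_add _
  map_mul' _ _ := rfl
  map_star' _ := rfl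

lemma mk_surjective : Function.Surjective hK.mk := hK.mkₗ_surjective

variable {hK}

lemma mk_eq_zero_iff {x : C} : hK.mk x = 0 ↔ x ∈ K := by
  simpa only [map_zero, sub_zero] using! hK.mkₗ_eq_iff (x := x) (y := 0)

lemma mem_of_star_mul_self_mem {x : C} (hK : IsIdeal K) (h : star x * x ∈ K) : x ∈ K := by
  rwa [← hK.mk_eq_zero_iff, map_mul, map_star, CStarRing.star_mul_self_eq_zero_iff,
    mk_eq_zero_iff] at h

lemma norm_mk (x : C) : ‖hK.mk x‖ = Metric.infDist x K := hK.norm_mkₗ x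

lemma norm_mk_lt_iff {x : C} {r : ℝ} : ‖hK.mk x‖ < r ↔ ∃ k ∈ K, ‖x - k‖ < r :=
  hK.norm_mkₗ_lt_iff

lemma norm_mk_le (x : C) : ‖hK.mk x‖ ≤ ‖x‖ := by
  simpa only [sub_zero] using! hK.norm_mkₗ_le (x := x) hK.zero_mem

lemma continuous_mk : Continuous hK.mk :=
  AddMonoidHomClass.continuous_of_bound hK.mk 1 fun x => by simpa only [one_mul] using norm_mk_le x

lemma preimage_mk {L : Set hK.Quotient} (hL : IsIdeal L) : IsIdeal (hK.mk ⁻¹' L) :=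
  of_mul_mem (hL.isClosed.preimage continuous_mk)
    (by rw [Set.mem_preimage, map_zero]; exact hL.zero_mem)
    (fun _ hx _ hy => by rw [Set.mem_preimage, map_add]; exact hL.add_mem hx hy)
    (fun c _ hx => by rw [Set.mem_preimage, map_smul]; exact hL.smul_mem c hx)
    (fun _ hx c => by rw [Set.mem_preimage, map_mul]; exact hL.mul_mem_left _ hx)
    (fun _ hx c => by rw [Set.mem_preimage, map_mul]; exact hL.mul_mem_right _ hx)

lemma subset_preimage_mk {L : Set hK.Quotient} (hL : IsIdeal L) : K ⊆ hK.mk ⁻¹' L := by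
  intro x hx
  rw [Set.mem_preimage, mk_eq_zero_iff.2 hx]
  exact hL.zero_mem

lemma mk_mem_idealGen {x y : C} (hx : x ∈ idealGen {y}) : hK.mk x ∈ idealGen {hK.mk y} :=
  idealGen_singleton_subset (preimage_mk (isIdeal_idealGen _)) (mem_idealGen_self (hK.mk y)) hx

lemma closure_image_mk {L : Set C} (hL : IsIdeal L) : IsIdeal (_root_.closure (hK.mk '' L)) := by
  refine closure ⟨0, hL.zero_mem, map_zero _⟩ ?_ ?_ ?_ ?_
  · rintro _ ⟨x, hx, rfl⟩ _ ⟨y, hy, rfl⟩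
    exact ⟨x + y, hL.add_mem hx hy, map_add _ _ _⟩
  · rintro c _ ⟨x, hx, rfl⟩
    exact ⟨c • x, hL.smul_mem c hx, map_smul _ _ _⟩
  · rintro _ ⟨x, hx, rfl⟩ c
    obtain ⟨c, rfl⟩ := hK.mk_surjective c
    exact ⟨c * x, hL.mul_mem_left c hx, map_mul _ _ _⟩
  · rintro _ ⟨x, hx, rfl⟩ c
    obtain ⟨c, rfl⟩ := hK.mk_surjective c
    exact ⟨x * c, hL.mul_mem_right c hx, map_mul _ _ _⟩

lemma idealGen_mk_subset_closure (y : C) :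
    idealGen {hK.mk y} ⊆ _root_.closure (hK.mk '' idealGen {y}) :=
  idealGen_singleton_subset (closure_image_mk (isIdeal_idealGen _))
    (subset_closure ⟨y, mem_idealGen_self y, rfl⟩)

section Order

variable [PartialOrder C] [StarOrderedRing C]

lemma exists_nonneg_mk_eq {z : hK.Quotient} (hz : 0 ≤ z) : ∃ x : C, 0 ≤ x ∧ hK.mk x = z := by
  obtain ⟨w, rfl⟩ := CStarAlgebra.nonneg_iff_eq_star_mul_self.1 hz
  obtain ⟨x, rfl⟩ := hK.mk_surjective w
  exact ⟨star x * x, star_mul_self_nonneg x, by rw [map_mul, map_star]⟩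

lemma exists_mk_eq_of_mk_le_mk_add {x y : C} {z : hK.Quotient} (h : hK.mk x ≤ hK.mk y + z) :
    ∃ e : C, hK.mk e = z ∧ x ≤ y + e := by
  obtain ⟨s, hs, hmk⟩ := exists_nonneg_mk_eq (sub_nonneg.2 h)
  refine ⟨x - y + s, ?_, ?_⟩
  · rw [map_add, map_sub, hmk]; abel
  · rw [← add_assoc, add_sub_cancel]; exact le_add_of_nonneg_right hs

end Order

end IsIdeal

end Quotient

section Comparison

variable {C : Type*} [NonUnitalCStarAlgebra C] {a b c : C}

/-- `a ⊕ a ≼ c`, the Cuntz comparison over 2 × 2 matrices: the row `(x, y)` compresses `c` to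
approximately `diag(a, a)`. -/
def DoublyCuntzBelow (a c : C) : Prop :=
  (a, a, 0) ∈ closure (Set.range fun v : C × C =>
    (star v.1 * c * v.1, star v.2 * c * v.2, star v.1 * c * v.2))

lemma cuntzBelow_iff_mem_closure :
    CuntzBelow a b ↔ a ∈ closure (Set.range fun x : C => star x * b * x) := by
  simp only [CuntzBelow, Metric.mem_closure_range_iff, dist_eq_norm]

lemma doublyCuntzBelow_iff :
    DoublyCuntzBelow a c ↔ ∀ ε : ℝ, 0 < ε → ∃ x y : C, ‖a - star x * c * x‖ < ε ∧
      ‖a - star y * c * y‖ < ε ∧ ‖star x * c * y‖ < ε := by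
  simp [DoublyCuntzBelow, Metric.mem_closure_range_iff, dist_eq_norm]

lemma isClosed_setOf_cuntzBelow (b : C) : IsClosed {a : C | CuntzBelow a b} := by
  simp only [cuntzBelow_iff_mem_closure, Set.ofPred_mem_eq, isClosed_closure]

lemma cuntzBelow_conj (x b : C) : CuntzBelow (star x * b * x) b :=
  cuntzBelow_iff_mem_closure.2 (subset_closure ⟨x, rfl⟩)

lemma CuntzBelow.conj (h : CuntzBelow a b) (x : C) : CuntzBelow (star x * a * x) b := by
  rw [cuntzBelow_iff_mem_closure] at h ⊢
  refine map_mem_closure (f := fun a => star x * a * x) (by fun_prop) h ?_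
  rintro _ ⟨y, rfl⟩
  exact ⟨y * x, by simp only [star_mul, mul_assoc]⟩

lemma CuntzBelow.trans (hab : CuntzBelow a b) (hbc : CuntzBelow b c) : CuntzBelow a c := by
  rw [cuntzBelow_iff_mem_closure] at hab
  refine closure_minimal ?_ (isClosed_setOf_cuntzBelow c) hab
  rintro _ ⟨x, rfl⟩
  exact hbc.conj x

lemma cuntzBelow_zero (b : C) : CuntzBelow 0 b := by
  simpa using cuntzBelow_conj 0 b

lemma CuntzBelow.smul (h : CuntzBelow a b) {r : ℝ} (hr : 0 ≤ r) : CuntzBelow (r • a) b := by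
  rw [cuntzBelow_iff_mem_closure] at h ⊢
  refine map_mem_closure (continuous_const_smul r) h ?_
  rintro _ ⟨x, rfl⟩
  refine ⟨√r • x, ?_⟩
  simp only [star_smul, star_trivial, smul_mul_assoc, mul_smul_comm, smul_smul,
    Real.mul_self_sqrt hr]

lemma CuntzBelow.mem_of_mem (h : CuntzBelow a b) {K : Set C} (hK : IsIdeal K) (hb : b ∈ K) :
    a ∈ K := by
  refine closure_minimal ?_ hK.isClosed (cuntzBelow_iff_mem_closure.1 h)
  rintro _ ⟨x, rfl⟩
  exact hK.mul_mem_right _ (hK.mul_mem_left _ hb)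

lemma DoublyCuntzBelow.cuntzBelow (h : DoublyCuntzBelow a c) : CuntzBelow a c := by
  rw [cuntzBelow_iff_mem_closure]
  refine map_mem_closure continuous_fst h ?_
  rintro _ ⟨v, rfl⟩
  exact ⟨v.1, rfl⟩

lemma CuntzBelow.trans_doubly (hab : CuntzBelow a b) (hbc : DoublyCuntzBelow b c) :
    DoublyCuntzBelow a c := by
  refine closure_minimal ?_ isClosed_closure (map_mem_closure (f := fun a => (a, a, (0 : C)))
    (by fun_prop) (cuntzBelow_iff_mem_closure.1 hab) (fun _ h => Set.mem_image_of_mem _ h))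
  rintro _ ⟨_, ⟨x, rfl⟩, rfl⟩
  have hx : (star x * b * x, star x * b * x, (0 : C)) =
      (star x * b * x, star x * b * x, star x * 0 * x) := by simp
  beta_reduce
  rw [hx]
  refine map_mem_closure (f := fun p : C × C × C =>
    (star x * p.1 * x, star x * p.2.1 * x, star x * p.2.2 * x)) (by fun_prop) hbc ?_
  rintro _ ⟨v, rfl⟩
  exact ⟨(v.1 * x, v.2 * x), by simp only [star_mul, mul_assoc]⟩

lemma DoublyCuntzBelow.trans (hab : DoublyCuntzBelow a b) (hbc : CuntzBelow b c) :
    DoublyCuntzBelow a c := by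
  refine closure_minimal ?_ isClosed_closure hab
  rintro _ ⟨v, rfl⟩
  refine map_mem_closure (f := fun b => (star v.1 * b * v.1, star v.2 * b * v.2,
    star v.1 * b * v.2)) (by fun_prop) (cuntzBelow_iff_mem_closure.1 hbc) ?_
  rintro _ ⟨z, rfl⟩
  exact ⟨(z * v.1, z * v.2), by simp only [star_mul, mul_assoc]⟩

lemma DoublyCuntzBelow.conj_add_conj (h : DoublyCuntzBelow a c) (hc : IsSelfAdjoint c) (s t : C) :
    CuntzBelow (star s * a * s + star t * a * t) c := by
  have hlim : star s * a * s + star t * a * t = star s * a * s + star t * a * t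
      + (star s * 0 * t + star (star s * 0 * t)) := by simp
  rw [cuntzBelow_iff_mem_closure, hlim]
  refine map_mem_closure (f := fun p : C × C × C => star s * p.1 * s + star t * p.2.1 * t
    + (star s * p.2.2 * t + star (star s * p.2.2 * t))) (by fun_prop) h ?_
  rintro _ ⟨v, rfl⟩
  refine ⟨v.1 * s + v.2 * t, ?_⟩
  simp only [star_add, star_mul, star_star, hc.star_eq]
  noncomm_ring

lemma DoublyCuntzBelow.add {a₁ a₂ : C} (h : DoublyCuntzBelow a c) (hc : IsSelfAdjoint c)
    (h₁ : CuntzBelow a₁ a) (h₂ : CuntzBelow a₂ a) : CuntzBelow (a₁ + a₂) c := by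
  rw [cuntzBelow_iff_mem_closure] at h₁ h₂
  refine closure_minimal ?_ (isClosed_setOf_cuntzBelow c)
    (map_mem_closure₂ continuous_add h₁ h₂ fun _ h₁ _ h₂ => Set.add_mem_add h₁ h₂)
  rintro _ ⟨_, ⟨s, rfl⟩, _, ⟨t, rfl⟩, rfl⟩
  exact h.conj_add_conj hc s t

lemma CuntzBelow.mk {K : Set C} (hK : IsIdeal K) (h : CuntzBelow a b) :
    CuntzBelow (hK.mk a) (hK.mk b) := by
  rw [cuntzBelow_iff_mem_closure] at h ⊢
  refine map_mem_closure IsIdeal.continuous_mk h ?_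
  rintro _ ⟨x, rfl⟩
  exact ⟨hK.mk x, by simp only [map_mul, map_star]⟩

lemma DoublyCuntzBelow.mk {K : Set C} (hK : IsIdeal K) (h : DoublyCuntzBelow a c) :
    DoublyCuntzBelow (hK.mk a) (hK.mk c) := by
  have hmk := IsIdeal.continuous_mk (hK := hK)
  have h0 : (0 : hK.Quotient) = hK.mk 0 := (map_zero _).symm
  rw [DoublyCuntzBelow, h0]
  refine map_mem_closure (f := fun p : C × C × C => (hK.mk p.1, hK.mk p.2.1, hK.mk p.2.2))
    (by fun_prop) h ?_
  rintro _ ⟨v, rfl⟩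
  exact ⟨(hK.mk v.1, hK.mk v.2), by simp only [map_mul, map_star]⟩

section Order

variable [PartialOrder C] [StarOrderedRing C]

lemma inr_sqrt {g : C} (hg : 0 ≤ g) :
    ((CFC.sqrt g : C) : Unitization ℂ C) = CFC.sqrt (g : Unitization ℂ C) := by
  refine (CFC.sqrt_unique ?_ (Unitization.inr_nonneg_iff.2 (CFC.sqrt_nonneg g))).symm
  rw [← Unitization.inr_mul, CFC.sqrt_mul_sqrt_self g hg]

lemma inr_le_inr_add_algebraMap {g T m : C} (hg : IsSelfAdjoint g) (hT : IsSelfAdjoint T) {η : ℝ}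
    (h : g ≤ T + m) (hm : ‖m‖ ≤ η) : (g : Unitization ℂ C) ≤ T + algebraMap ℝ _ η := by
  have hmsa : IsSelfAdjoint m := by
    rw [show m = (T + m - g) - T + g by abel]
    exact ((IsSelfAdjoint.of_nonneg (sub_nonneg.2 h)).sub hT).add hg
  have hm' : (m : Unitization ℂ C) ≤ algebraMap ℝ _ η :=
    (IsSelfAdjoint.le_algebraMap_norm_self (hmsa.inr ℂ)).trans
      (algebraMap_mono _ (by rwa [Unitization.norm_inr]))
  have h' : (g : Unitization ℂ C) ≤ T + m := by
    rw [← sub_nonneg, ← Unitization.inr_add, ← Unitization.inr_sub]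
    exact Unitization.inr_nonneg_iff.2 (sub_nonneg.2 h)
  exact h'.trans (add_le_add le_rfl hm')

-- `w = S^(-1/2) g^(1/2)` is a contraction because `g ≤ S`.
lemma exists_star_mul_inr_mul_eq {g : C} (hg : 0 ≤ g) {S : Unitization ℂ C}
    (hS : IsStrictlyPositive S) (hgS : (g : Unitization ℂ C) ≤ S) :
    ∃ w : C, ‖w‖ ≤ 1 ∧ star (w : Unitization ℂ C) * S * w = g := by
  have hr : star (CFC.sqrt g) = CFC.sqrt g := IsSelfAdjoint.of_nonneg (CFC.sqrt_nonneg g)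
  have hR : star (S ^ (-(1 / 2) : ℝ)) = S ^ (-(1 / 2) : ℝ) :=
    IsSelfAdjoint.of_nonneg CFC.rpow_nonneg
  obtain ⟨w, hw⟩ : ∃ w : C, (w : Unitization ℂ C) = S ^ (-(1 / 2) : ℝ) * (CFC.sqrt g : C) :=
    ⟨(S ^ (-(1 / 2) : ℝ) * (CFC.sqrt g : C)).snd, by ext <;> simp⟩
  have hw' : star (w : Unitization ℂ C) = (CFC.sqrt g : C) * S ^ (-(1 / 2) : ℝ) := by
    rw [hw, star_mul, hR, ← Unitization.inr_star, hr]
  refine ⟨w, ?_, ?_⟩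
  · rw [← norm_star, ← Unitization.norm_inr (𝕜 := ℂ), Unitization.inr_star, hw', inr_sqrt hg]
    exact (le_iff_norm_sqrt_mul_rpow (g : Unitization ℂ C) S).1 hgS
  · calc star (w : Unitization ℂ C) * S * w
        = (CFC.sqrt g : C) * (S ^ (-(1 / 2) : ℝ) * S * S ^ (-(1 / 2) : ℝ)) *
          ((CFC.sqrt g : C) : Unitization ℂ C) := by rw [hw', hw]; simp only [mul_assoc]
      _ = g := by
        rw [CFC.conjugate_rpow_neg_one_half S, mul_one, ← Unitization.inr_mul,
          CFC.sqrt_mul_sqrt_self g hg]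

lemma exists_norm_sub_conj_le {g T m : C} (hg : 0 ≤ g) (hT : 0 ≤ T) {η : ℝ} (hη : 0 < η)
    (h : g ≤ T + m) (hm : ‖m‖ ≤ η) : ∃ w : C, ‖w‖ ≤ 1 ∧ ‖g - star w * T * w‖ ≤ η := by
  obtain ⟨w, hw1, hw⟩ := exists_star_mul_inr_mul_eq hg
    (.nonneg_add (Unitization.inr_nonneg_iff.2 hT) (isStrictlyPositive_algebraMap hη))
    (inr_le_inr_add_algebraMap (.of_nonneg hg) (.of_nonneg hT) h hm)
  have hwT : g - star w * T * w = η • (star w * w) := by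
    refine Unitization.inr_injective (R := ℂ) ?_
    rw [Unitization.inr_sub, ← hw]
    simp [mul_add, add_mul, Algebra.algebraMap_eq_smul_one]
  refine ⟨w, hw1, ?_⟩
  rw [hwT, norm_smul, CStarRing.norm_star_mul_self, Real.norm_of_nonneg hη.le]
  exact mul_le_of_le_one_right hη.le (mul_le_one₀ hw1 (norm_nonneg _) hw1)

lemma cuntzBelow_of_le (ha : 0 ≤ a) (hab : a ≤ b) : CuntzBelow a b := by
  intro ε hε
  obtain ⟨w, -, hw⟩ := exists_norm_sub_conj_le ha (ha.trans hab) (half_pos hε) (m := 0)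
    (by simpa using hab) (by simpa using (half_pos hε).le)
  exact ⟨w, by linarith⟩

lemma ProperlyInfinite.doublyCuntzBelow (ha : 0 ≤ a) (h : ProperlyInfinite a) :
    DoublyCuntzBelow a a := by
  have hr : star (CFC.sqrt a) = CFC.sqrt a := IsSelfAdjoint.of_nonneg (CFC.sqrt_nonneg a)
  have hconj (c d : C) : star (CFC.sqrt a * c) * a * (CFC.sqrt a * d) =
      star (a * c) * (a * d) := by
    nth_rw 2 4 5 [← CFC.sqrt_mul_sqrt_self a ha]
    simp only [star_mul, hr, mul_assoc]
  rw [doublyCuntzBelow_iff]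
  intro ε hε
  obtain ⟨_, _, ⟨c, rfl⟩, ⟨d, rfl⟩, hc, hd, hcd⟩ := h (ε / 2) (half_pos hε)
  rw [norm_sub_rev] at hc hd
  refine ⟨CFC.sqrt a * c, CFC.sqrt a * d, ?_, ?_, ?_⟩ <;> rw [hconj] <;> linarith

lemma IsIdeal.sqrt_mem {K : Set C} (hK : IsIdeal K) (ha : 0 ≤ a) (haK : a ∈ K) :
    CFC.sqrt a ∈ K := by
  refine hK.mem_of_star_mul_self_mem ?_
  rwa [(IsSelfAdjoint.of_nonneg (CFC.sqrt_nonneg a)).star_eq, CFC.sqrt_mul_sqrt_self a ha]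

lemma DoublyCuntzBelow.isIdeal (h : DoublyCuntzBelow a a) (ha : 0 ≤ a) :
    IsIdeal {z : C | CuntzBelow (star z * z) a} := by
  have hsa := IsSelfAdjoint.of_nonneg ha
  refine IsIdeal.of_mul_mem ((isClosed_setOf_cuntzBelow a).preimage
    (f := fun z : C => star z * z) (by fun_prop)) ?_ ?_ ?_ ?_ ?_
  · simpa using cuntzBelow_zero a
  · intro z hz w hw
    have hle : star (z + w) * (z + w) ≤
        star z * z + star z * z + (star w * w + star w * w) := by
      have hdiff : star z * z + star z * z + (star w * w + star w * w) - star (z + w) * (z + w) =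
          star (z - w) * (z - w) := by simp only [star_add, star_sub]; noncomm_ring
      rw [← sub_nonneg, hdiff]
      exact star_mul_self_nonneg _
    exact (cuntzBelow_of_le (star_mul_self_nonneg _) hle).trans
      (h.add hsa (h.add hsa hz hz) (h.add hsa hw hw))
  · intro c z hz
    have hc : star (c • z) * (c • z) = (‖c‖ ^ 2) • (star z * z) := by
      rw [star_smul, smul_mul_smul_comm, ← Complex.coe_smul, ← starRingEnd_apply,
        Complex.conj_mul', Complex.ofReal_pow]
    simpa only [Set.mem_ofPred_eq, hc] using CuntzBelow.smul hz (by positivity)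
  · intro z hz c
    have hle : star (c * z) * (c * z) ≤ ‖star c * c‖ • (star z * z) := by
      simpa [star_mul, mul_assoc] using CStarAlgebra.star_left_conjugate_le_norm_smul (a := z)
        (b := star c * c) (.star_mul_self c)
    exact (cuntzBelow_of_le (star_mul_self_nonneg _) hle).trans (CuntzBelow.smul hz (norm_nonneg _))
  · intro z hz c
    simpa [star_mul, mul_assoc] using CuntzBelow.conj hz c

lemma DoublyCuntzBelow.cuntzBelow_of_mem_idealGen (h : DoublyCuntzBelow a a) (ha : 0 ≤ a)
    (hb : 0 ≤ b) (hba : b ∈ idealGen {a}) : CuntzBelow b a := by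
  have haa : CuntzBelow (star a * a) a := by
    have hsa : star a * a = star (CFC.sqrt a) * a * CFC.sqrt a := by
      rw [(IsSelfAdjoint.of_nonneg ha).star_eq,
        (IsSelfAdjoint.of_nonneg (CFC.sqrt_nonneg a)).star_eq]
      nth_rw 1 2 4 [← CFC.sqrt_mul_sqrt_self a ha]
      simp only [mul_assoc]
    exact hsa ▸ cuntzBelow_conj _ a
  have hsqrt := idealGen_singleton_subset (h.isIdeal ha) haa
    ((isIdeal_idealGen {a}).sqrt_mem hb hba)
  rwa [Set.mem_ofPred_eq, (IsSelfAdjoint.of_nonneg (CFC.sqrt_nonneg b)).star_eq,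
    CFC.sqrt_mul_sqrt_self b hb] at hsqrt

end Order
end Comparison

section Projections

variable {C : Type*} [NonUnitalCStarAlgebra C] {K : Set C} {a : C}

lemma IsIdeal.cfcₙ_mem (hK : IsIdeal K) (f : ℝ → ℝ) (haK : a ∈ K) :
    cfcₙ f a ∈ K :=
  have : IsClosed (hK.starSubalgebra : Set C) := hK.isClosed_starSubalgebra
  (_root_.cfcₙ_mem (𝕜 := ℝ) (𝕜' := ℂ) (s := hK.starSubalgebra) f (a := a)
    (show a ∈ K ∧ star a ∈ K from ⟨haK, hK.star_mem haK⟩)).1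

lemma exists_isProjection_norm_sub_le (ha : IsSelfAdjoint a) {δ : ℝ} (hδ : δ ≤ 1 / 5)
    (h : ‖a * a - a‖ ≤ δ) :
    ∃ p, IsProjection p ∧ ‖p - a‖ ≤ 2 * δ ∧ ∀ L : Set C, IsIdeal L → a ∈ L → p ∈ L := by
  have hδ0 : 0 ≤ δ := (norm_nonneg _).trans h
  let χ : ℝ → ℝ := fun t => max (min (5 * t - 2) 1) 0
  have hχ0 : χ 0 = 0 := by simp [χ]
  have hχ : ContinuousOn χ (quasispectrum ℝ a) := by fun_prop
  have hspec : ∀ t ∈ quasispectrum ℝ a, |t * t - t| ≤ δ := by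
    have hcfc : a * a - a = cfcₙ (fun t : ℝ => t * t - t) a := by
      rw [cfcₙ_sub (fun t => t * t) (fun t => t) a, cfcₙ_mul (fun t => t) (fun t => t) a,
        cfcₙ_id' ℝ a]
    rw [hcfc, norm_cfcₙ_le_iff (fun t : ℝ => t * t - t) a δ] at h
    exact h
  have hcases : ∀ t ∈ quasispectrum ℝ a, χ t * χ t = χ t ∧ |χ t - t| ≤ 2 * δ := by
    intro t ht
    obtain ⟨hl, hu⟩ := abs_le.1 (hspec t ht)
    rcases le_total t (1 / 2) with h12 | h12
    · have hχt : χ t = 0 := max_eq_right ((min_le_left _ _).trans (by nlinarith))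
      rw [hχt, abs_le]
      exact ⟨by simp, by nlinarith, by nlinarith⟩
    · have hχt : χ t = 1 := by
        simp only [χ]
        rw [min_eq_right (by nlinarith), max_eq_left zero_le_one]
      rw [hχt, abs_le]
      exact ⟨by simp, by nlinarith, by nlinarith⟩
  refine ⟨cfcₙ χ a, ⟨cfcₙ_predicate χ a, ?_⟩, ?_, fun L hL haL => hL.cfcₙ_mem χ haL⟩
  · rw [← cfcₙ_mul χ χ a]
    exact cfcₙ_congr fun t ht => (hcases t ht).1
  · nth_rw 2 [← cfcₙ_id' ℝ a]
    rw [← cfcₙ_sub χ (fun t => t) a]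
    exact norm_cfcₙ_le fun t ht => (hcases t ht).2

/-- The defect projection `1 - v v*` of `v = x + (1 - w)`, multiplied out because `C` need not
have a unit; when `w x = x`, `v` is isometric iff `x* x = 1 - (1 - w)²`. -/
def isometryDefect (w x : C) : C :=
  w + w - w * w - x * star x - x - star x + x * w + w * star x

section IsometryDefect

variable {w x y : C}

lemma star_inr_add_one_sub (hw : IsSelfAdjoint w) (x : C) :
    star (x + (1 - w) : Unitization ℂ C) = (star x : C) + (1 - w) := by
  simp only [star_add, star_sub, star_one, ← Unitization.inr_star, hw.star_eq]

lemma inr_isometryDefect (hw : IsSelfAdjoint w) (x : C) :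
    ((isometryDefect w x : C) : Unitization ℂ C) =
      1 - (x + (1 - w)) * star (x + (1 - w) : Unitization ℂ C) := by
  simp only [isometryDefect, star_inr_add_one_sub hw, Unitization.inr_add, Unitization.inr_sub,
    Unitization.inr_mul]
  noncomm_ring

lemma isSelfAdjoint_isometryDefect (hw : IsSelfAdjoint w) (x : C) :
    IsSelfAdjoint (isometryDefect w x) := by
  refine Unitization.inr_injective (R := ℂ) ?_
  rw [Unitization.inr_star, inr_isometryDefect hw, star_sub, star_one, star_mul, star_star]

lemma star_mul_self_inr_add_one_sub (hw : IsSelfAdjoint w) (hwx : w * x = x) :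
    star (x + (1 - w) : Unitization ℂ C) * (x + (1 - w)) =
      1 + ((star x * x - (w + w - w * w) : C) : Unitization ℂ C) := by
  have hxw : ((star x : C) : Unitization ℂ C) * w = (star x : C) := by
    nth_rw 1 [← hw.star_eq]
    rw [← Unitization.inr_mul, ← star_mul, hwx]
  have hwx' : (w : Unitization ℂ C) * x = x := by rw [← Unitization.inr_mul, hwx]
  simp only [star_inr_add_one_sub hw, Unitization.inr_add, Unitization.inr_sub,
    Unitization.inr_mul, mul_add, add_mul, mul_sub, sub_mul, mul_one, one_mul, hwx', hxw]
  abel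

lemma norm_isometryDefect_mul_self_sub_le (hw : IsSelfAdjoint w) (hwx : w * x = x)
    (hx : ‖star x * x - (w + w - w * w)‖ ≤ 1 / 100) :
    ‖isometryDefect w x * isometryDefect w x - isometryDefect w x‖ ≤ 1 / 50 := by
  let v : Unitization ℂ C := x + (1 - w)
  let m : Unitization ℂ C := (star x * x - (w + w - w * w) : C)
  have hm : ‖m‖ ≤ 1 / 100 := by rwa [Unitization.norm_inr]
  have hvm : star v * v = 1 + m := star_mul_self_inr_add_one_sub hw hwx
  have hv : ‖v‖ * ‖v‖ ≤ 1 + 1 / 100 := by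
    rw [← CStarRing.norm_star_mul_self, hvm]
    exact (norm_add_le _ _).trans (add_le_add norm_one.le hm)
  have hid : (1 - v * star v) * (1 - v * star v) - (1 - v * star v) = v * m * star v := by
    rw [← sub_eq_iff_eq_add'.2 hvm]
    noncomm_ring
  rw [← Unitization.norm_inr (𝕜 := ℂ), Unitization.inr_sub, Unitization.inr_mul,
    inr_isometryDefect hw, hid]
  calc ‖v * m * star v‖ ≤ ‖v‖ * ‖m‖ * ‖star v‖ := norm_mul₃_le
    _ = ‖v‖ * ‖v‖ * ‖m‖ := by rw [norm_star]; ring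
    _ ≤ (1 + 1 / 100) * (1 / 100) := by gcongr
    _ ≤ 1 / 50 := by norm_num

lemma star_conj_isometryDefect (hw : IsSelfAdjoint w) (hwy : w * y = y) :
    star y * isometryDefect w x * y = star y * y - star (star x * y) * (star x * y) := by
  have hyw : star y * w = star y := by rw [← hw.star_eq, ← star_mul, hwy]
  have hyw' (z : C) : star y * (w * z) = star y * z := by rw [← mul_assoc, hyw]
  simp only [isometryDefect, mul_add, add_mul, mul_sub, sub_mul, mul_assoc, hwy, hyw', star_mul,
    star_star]
  abel

lemma exists_isProjection_norm_sub_conj_le (hw : IsSelfAdjoint w) (hf : ‖w + w - w * w‖ ≤ 1)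
    (hwx : w * x = x) (hwy : w * y = y) (hx : ‖star x * x - (w + w - w * w)‖ ≤ 1 / 100)
    (hy : ‖star y * y - (w + w - w * w)‖ ≤ 1 / 100) (hxy : ‖star x * y‖ ≤ 1 / 100) :
    ∃ p, IsProjection p ∧ ‖w + w - w * w - star y * p * y‖ ≤ 1 / 4 ∧
      ∀ L : Set C, IsIdeal L → w ∈ L → x ∈ L → p ∈ L := by
  obtain ⟨p, hp, hpq, hpL⟩ := exists_isProjection_norm_sub_le (isSelfAdjoint_isometryDefect hw x)
    (by norm_num) (norm_isometryDefect_mul_self_sub_le hw hwx hx)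
  set f := w + w - w * w
  refine ⟨p, hp, ?_, fun L hL hwL hxL => hpL L hL ?_⟩
  · have hyn : ‖y‖ * ‖y‖ ≤ 1 + 1 / 100 := by
      rw [← CStarRing.norm_star_mul_self, ← add_sub_cancel f (star y * y)]
      exact (norm_add_le _ _).trans (add_le_add hf hy)
    have hsplit : f - star y * p * y = -(star y * y - f) + star (star x * y) * (star x * y)
        - star y * (p - isometryDefect w x) * y := by
      rw [mul_sub, sub_mul, star_conj_isometryDefect hw hwy]
      abel
    calc ‖f - star y * p * y‖
        ≤ ‖star y * y - f‖ + ‖star x * y‖ * ‖star x * y‖ +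
          ‖y‖ * ‖y‖ * ‖p - isometryDefect w x‖ := by
          rw [hsplit]
          refine (norm_sub_le _ _).trans (add_le_add ((norm_add_le _ _).trans ?_) ?_)
          · rw [norm_neg, CStarRing.norm_star_mul_self]
          · refine norm_mul₃_le.trans_eq ?_
            rw [norm_star]; ring
      _ ≤ 1 / 100 + 1 / 100 * (1 / 100) + (1 + 1 / 100) * (2 * (1 / 50)) := by gcongr
      _ ≤ 1 / 4 := by norm_num
  · have hsx := hL.star_mem hxL
    exact hL.add_mem (hL.add_mem (hL.sub_mem (hL.sub_mem (hL.sub_mem (hL.sub_mem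
      (hL.add_mem hwL hwL) (hL.mul_mem_left _ hwL)) (hL.mul_mem_left _ hsx)) hxL) hsx)
      (hL.mul_mem_left _ hwL)) (hL.mul_mem_left _ hsx)

end IsometryDefect

end Projections

lemma exists_cutDown_functions {κ : ℝ} (hκ : 0 < κ) : ∃ u s r : ℝ → ℝ,
    (Continuous u ∧ u 0 = 0) ∧ (Continuous s ∧ s 0 = 0) ∧ (Continuous r ∧ r 0 = 0) ∧
      (∀ t, 0 ≤ t → 0 ≤ u t ∧ u t ≤ 1) ∧ (∀ t, u t * r t = r t) ∧
      (∀ t, r t * r t = max (t - κ) 0) ∧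
      ∀ t, 0 ≤ t → s t * t * s t = u t + u t - u t * u t := by
  have hmax (t : ℝ) : 0 < max t κ := lt_max_of_lt_right hκ
  let u : ℝ → ℝ := fun t => (t / max t κ) ^ 2
  have hu : Continuous u := (continuous_id.div₀ (by fun_prop) fun t => (hmax t).ne').pow 2
  have hu01 (t : ℝ) (ht : 0 ≤ t) : 0 ≤ u t ∧ u t ≤ 1 := ⟨sq_nonneg _,
    pow_le_one₀ (div_nonneg ht (hmax t).le) (div_le_one_of_le₀ (le_max_left _ _) (hmax t).le)⟩
  refine ⟨u, fun t => √(t * (2 - u t)) / max t κ, fun t => √(max (t - κ) 0),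
    ⟨hu, by simp [u]⟩, ⟨.div₀ (by fun_prop) (by fun_prop) fun t => (hmax t).ne', by simp⟩,
    ⟨by fun_prop, by simp [hκ.le]⟩, hu01, fun t => ?_,
    fun t => Real.mul_self_sqrt (le_max_right _ _), fun t ht => ?_⟩
  · rcases le_total t κ with h | h
    · simp [h]
    · simp [u, max_eq_left h, (hκ.trans_le h).ne']
  · have hsqrt : √(t * (2 - u t)) * √(t * (2 - u t)) = t * (2 - u t) :=
      Real.mul_self_sqrt (mul_nonneg ht (by linarith [(hu01 t ht).2]))
    calc √(t * (2 - u t)) / max t κ * t * (√(t * (2 - u t)) / max t κ)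
        = √(t * (2 - u t)) * √(t * (2 - u t)) * t / max t κ ^ 2 := by ring
      _ = u t * (2 - u t) := by rw [hsqrt]; simp only [u]; ring
      _ = u t + u t - u t * u t := by ring

section CutDown

variable {C : Type*} [NonUnitalCStarAlgebra C] {K : Set C} {a : C} {κ : ℝ}

/-- The cut-down `(a - κ)₊` of a positive element. It is meant for `0 ≤ κ`, where
`t ↦ max (t - κ) 0` vanishes at `0`; for `κ < 0` the functional calculus returns `0`. -/
noncomputable def cutDown (κ : ℝ) (a : C) : C := cfcₙ (fun t : ℝ => max (t - κ) 0) a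

lemma IsIdeal.cutDown_mem (hK : IsIdeal K) (haK : a ∈ K) (κ : ℝ) : cutDown κ a ∈ K :=
  hK.cfcₙ_mem _ haK

variable [PartialOrder C] [StarOrderedRing C]

lemma cutDown_nonneg (κ : ℝ) (a : C) : 0 ≤ cutDown κ a :=
  cfcₙ_nonneg fun _ _ => le_max_right _ _

lemma cutDown_le (hκ : 0 ≤ κ) (ha : 0 ≤ a) : cutDown κ a ≤ a := by
  nth_rw 2 [← cfcₙ_id' ℝ a]
  refine cfcₙ_mono (fun t ht => ?_) (hf0 := by simpa using hκ)
  exact max_le (sub_le_self t hκ) (quasispectrum_nonneg_of_nonneg a ha t ht)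

lemma norm_sub_cutDown_le (hκ : 0 ≤ κ) (ha : 0 ≤ a) : ‖a - cutDown κ a‖ ≤ κ := by
  nth_rw 1 [← cfcₙ_id' ℝ a]
  rw [cutDown, ← cfcₙ_sub (fun t => t) (fun t => max (t - κ) 0) a (hg0 := by simpa using hκ)]
  refine norm_cfcₙ_le fun t ht => abs_le.2 ?_
  have ht0 : 0 ≤ t := quasispectrum_nonneg_of_nonneg a ha t ht
  rcases max_cases (t - κ) 0 with h | h <;> constructor <;> linarith

lemma IsIdeal.exists_cutDown_notMem (hK : IsIdeal K) (ha : 0 ≤ a) (haK : a ∉ K) :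
    ∃ κ > 0, cutDown κ a ∉ K := by
  contrapose! haK
  exact hK.mem_of_forall_norm_sub_lt fun ε hε => ⟨_, haK (ε / 2) (half_pos hε),
    (norm_sub_cutDown_le (half_pos hε).le ha).trans_lt (half_lt_self hε)⟩

lemma exists_local_unit (hκ : 0 < κ) (ha : 0 ≤ a) : ∃ w ψ ρ : C,
    IsSelfAdjoint w ∧ IsSelfAdjoint ψ ∧ IsSelfAdjoint ρ ∧ w ∈ idealGen {a} ∧
      ρ * ρ = cutDown κ a ∧ w * ρ = ρ ∧ ψ * a * ψ = w + w - w * w ∧ ‖w + w - w * w‖ ≤ 1 := by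
  obtain ⟨u, s, r, ⟨hu, hu0⟩, ⟨hs, hs0⟩, ⟨hr, hr0⟩, hu01, hur, hrr, hsts⟩ :=
    exists_cutDown_functions hκ
  have hspec := quasispectrum_nonneg_of_nonneg (𝕜 := ℝ) a ha
  have hf : cfcₙ u a + cfcₙ u a - cfcₙ u a * cfcₙ u a =
      cfcₙ (fun t => u t + u t - u t * u t) a := by
    rw [cfcₙ_sub (fun t => u t + u t) (fun t => u t * u t) a, cfcₙ_add u u a, cfcₙ_mul u u a]
  refine ⟨cfcₙ u a, cfcₙ s a, cfcₙ r a, cfcₙ_predicate u a, cfcₙ_predicate s a,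
    cfcₙ_predicate r a, (isIdeal_idealGen {a}).cfcₙ_mem u (mem_idealGen_self a), ?_, ?_, ?_, ?_⟩
  · rw [← cfcₙ_mul r r a]
    exact cfcₙ_congr fun t _ => hrr t
  · rw [← cfcₙ_mul u r a]
    exact cfcₙ_congr fun t _ => hur t
  · nth_rw 2 [← cfcₙ_id' ℝ a]
    rw [hf, ← cfcₙ_mul s (fun t => t) a, ← cfcₙ_mul (fun t => s t * t) s a]
    exact cfcₙ_congr fun t ht => hsts t (hspec t ht)
  · rw [hf]
    refine norm_cfcₙ_le fun t ht => abs_le.2 ?_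
    obtain ⟨ht0, ht1⟩ := hu01 t (hspec t ht)
    constructor <;> nlinarith

lemma IsProjection.nonneg {p : C} (hp : IsProjection p) : 0 ≤ p := by
  rw [← hp.2]
  nth_rw 1 [← hp.1]
  exact star_mul_self_nonneg p

lemma conj_le_smul_of_norm_le {m ρ : C} (hm : IsSelfAdjoint m) (hρ : IsSelfAdjoint ρ) {c : ℝ}
    (hc : ‖m‖ ≤ c) : ρ * m * ρ ≤ c • (ρ * ρ) := by
  have hle := CStarAlgebra.star_left_conjugate_le_norm_smul (a := ρ) (hb := hm)
  rw [hρ.star_eq] at hle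
  exact hle.trans (smul_le_smul_of_nonneg_right hc hρ.mul_self_nonneg)

lemma cuntzBelow_of_norm_local_unit_sub_conj_le {w ρ y p : C} (hw : IsSelfAdjoint w)
    (hρ : IsSelfAdjoint ρ) (hwρ : w * ρ = ρ) (hp : IsProjection p)
    (h : ‖w + w - w * w - star y * p * y‖ ≤ 1 / 4) : CuntzBelow (ρ * ρ) p := by
  set e := w + w - w * w - star y * p * y
  have he : IsSelfAdjoint e := by
    simp only [e, IsSelfAdjoint, star_sub, star_add, star_mul, star_star, hw.star_eq, hp.1,
      mul_assoc]
  have hT : star (y * ρ) * p * (y * ρ) = ρ * ρ - ρ * e * ρ := by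
    simp only [e, mul_sub, sub_mul, mul_add, add_mul, mul_assoc, hwρ, star_mul, hρ.star_eq]
    abel
  have hle : ρ * ρ ≤ (4 / 3 : ℝ) • (star (y * ρ) * p * (y * ρ)) := by
    have h34 := smul_nonneg (show (0 : ℝ) ≤ 4 / 3 by norm_num)
      (sub_nonneg.2 (conj_le_smul_of_norm_le he hρ h))
    rw [hT, ← sub_nonneg]
    convert h34 using 1
    module
  exact (cuntzBelow_of_le hρ.mul_self_nonneg hle).trans
    ((cuntzBelow_conj _ p).smul (by norm_num))

lemma exists_isProjection_of_doublyCuntzBelow_cutDown (ha : 0 ≤ a) (hκ : 0 < κ)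
    (h : DoublyCuntzBelow a (cutDown κ a)) :
    ∃ p, IsProjection p ∧ p ∈ idealGen {a} ∧ CuntzBelow (cutDown κ a) p := by
  obtain ⟨w, ψ, ρ, hw, hψ, hρ, hwI, hρρ, hwρ, hψψ, hf1⟩ := exists_local_unit hκ ha
  have hconj (x y : C) : star (ρ * x * ψ) * (ρ * y * ψ) = ψ * (star x * cutDown κ a * y) * ψ := by
    simp only [← hρρ, star_mul, hρ.star_eq, hψ.star_eq, mul_assoc]
  have hwmul (x : C) : w * (ρ * x * ψ) = ρ * x * ψ := by simp only [← mul_assoc, hwρ]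
  have hnorm : ∀ᶠ z in 𝓝 (a, a, (0 : C)), ‖ψ * z.1 * ψ - (w + w - w * w)‖ < 1 / 100 ∧
      ‖ψ * z.2.1 * ψ - (w + w - w * w)‖ < 1 / 100 ∧ ‖ψ * z.2.2 * ψ‖ < 1 / 100 := by
    have hlt (f : C × C × C → C) (hf : Continuous f) (h0 : f (a, a, 0) = 0) :
        ∀ᶠ z in 𝓝 (a, a, (0 : C)), ‖f z‖ < 1 / 100 :=
      hf.norm.tendsto _ |>.eventually_lt_const (by simp [h0])
    refine (hlt _ ?_ ?_).and ((hlt _ ?_ ?_).and (hlt _ ?_ ?_))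
    all_goals first | fun_prop | simp [hψψ]
  obtain ⟨_, ⟨hx, hy, hxy⟩, ⟨v, rfl⟩⟩ := mem_closure_iff_nhds.1 h _ hnorm
  simp only [← hconj] at hx hy hxy
  obtain ⟨p, hp, hpf, hpI⟩ := exists_isProjection_norm_sub_conj_le hw hf1 (hwmul v.1) (hwmul v.2)
    hx.le hy.le hxy.le
  have hI := isIdeal_idealGen {a}
  exact ⟨p, hp, hpI _ hI hwI (hwmul v.1 ▸ hI.mul_mem_right _ hwI),
    hρρ ▸ cuntzBelow_of_norm_local_unit_sub_conj_le hw hρ hwρ hp hpf⟩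

end CutDown

section Characters

variable {C : Type*} [NonUnitalCStarAlgebra C]

lemma IsCharacter.comp_mk {K : Set C} {hK : IsIdeal K} {φ : hK.Quotient →ₗ[ℂ] ℂ}
    (hφ : IsCharacter φ) : IsCharacter (φ ∘ₗ (hK.mk : C →ₗ[ℂ] hK.Quotient)) := by
  refine ⟨fun x y => (congrArg φ (map_mul hK.mk x y)).trans (hφ.1 _ _), fun h => hφ.2 ?_⟩
  refine LinearMap.ext (hK.mk_surjective.forall.2 fun x => ?_)
  exact LinearMap.congr_fun h x

lemma IsCharacter.continuous {φ : C →ₗ[ℂ] ℂ} (hφ : IsCharacter φ) : Continuous φ := by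
  let ψ : C →ₙₐ[ℂ] ℂ :=
    { φ with map_smul' := map_smul φ, map_zero' := map_zero φ, map_mul' := hφ.1 }
  refine AddMonoidHomClass.continuous_of_bound φ 1 fun x => ?_
  simpa [ψ, Unitization.norm_inr (𝕜 := ℂ)] using
    AlgHom.norm_apply_le_self (Unitization.lift ψ) (x : Unitization ℂ C)

lemma exists_isCharacter_of_forall_mul_eq_smul {g : C} (hg : g * g ≠ 0)
    (h : ∀ x : C, ∃ c : ℂ, x * g = c • g) : ∃ φ : C →ₗ[ℂ] ℂ, IsCharacter φ := by
  have hg0 : g ≠ 0 := fun h0 => hg (by rw [h0, mul_zero])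
  choose φ hφ using h
  have huniq {x : C} {c : ℂ} (hx : x * g = c • g) : φ x = c :=
    smul_left_injective ℂ hg0 ((hφ x).symm.trans hx)
  refine ⟨{ toFun := φ, map_add' := fun x y => huniq ?_, map_smul' := fun c x => huniq ?_ },
    fun x y => huniq ?_, fun h0 => hg ?_⟩
  · rw [add_mul, hφ, hφ, add_smul]
  · rw [smul_mul_assoc, hφ, smul_smul, RingHom.id_apply, smul_eq_mul]
  · simp only [LinearMap.coe_mk, AddHom.coe_mk]
    rw [mul_assoc, hφ, mul_smul_comm, hφ, smul_smul, mul_comm]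
  · rw [hφ, show φ g = 0 from LinearMap.congr_fun h0 g, zero_smul]

-- For `a = a*` one has `φ(x* a x) φ(y* a y) = φ(x* a y) φ(y* a x)`; in the limit
-- `(a, a, 0)` this reads `φ(a)² = 0`.
lemma IsCharacter.apply_eq_zero_of_doublyCuntzBelow {φ : C →ₗ[ℂ] ℂ} (hφ : IsCharacter φ) {a : C}
    (ha : IsSelfAdjoint a) (h : DoublyCuntzBelow a a) : φ a = 0 := by
  have hcont := hφ.continuous
  have hclosed : IsClosed {z : C × C × C | φ z.1 * φ z.2.1 = φ z.2.2 * φ (star z.2.2)} :=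
    isClosed_eq (by fun_prop) (by fun_prop)
  have hlim : φ a * φ a = φ (0 : C) * φ (star 0) := hclosed.closure_subset_iff.2
    (Set.range_subset_iff.2 fun v => by
      simp only [Set.mem_ofPred_eq, hφ.1, star_mul, star_star, ha.star_eq]; ring) h
  simpa using hlim

lemma IsIdeal.posPart_mem {K : Set C} (hK : IsIdeal K) {x : C} (hx : x ∈ K) : x⁺ ∈ K :=
  hK.cfcₙ_mem _ hx

lemma IsIdeal.negPart_mem {K : Set C} (hK : IsIdeal K) {x : C} (hx : x ∈ K) : x⁻ ∈ K :=
  hK.cfcₙ_mem _ hx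

section Order

variable [PartialOrder C] [StarOrderedRing C]

lemma exists_real_smul_eq_of_forall_le_or_le {g h : C} (hg : 0 ≤ g) (hg0 : g ≠ 0)
    (hle : ∀ t : ℝ, h ≤ t • g ∨ t • g ≤ h) : ∃ t : ℝ, h = t • g := by
  have hunbdd (b : C) : ∃ t : ℝ, ¬ t • g ≤ b := by
    by_contra! hall
    set t := (‖b‖ + 1) / ‖g‖
    have hg' : 0 < ‖g‖ := norm_pos_iff.2 hg0
    have ht : 0 ≤ t := by positivity
    have := CStarAlgebra.norm_le_norm_of_nonneg_of_le (smul_nonneg ht hg) (hall t)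
    rw [norm_smul, Real.norm_of_nonneg ht, div_mul_cancel₀ _ hg'.ne'] at this
    linarith
  obtain ⟨s, hs⟩ := hunbdd h
  obtain ⟨t, ht⟩ := hunbdd (-h)
  have hcont : Continuous fun t : ℝ => t • g := by fun_prop
  obtain ⟨r, -, hr⟩ := isPreconnected_closed_iff.1 (isPreconnected_univ (α := ℝ))
    {t | h ≤ t • g} {t | t • g ≤ h} (isClosed_le continuous_const hcont)
    (isClosed_le hcont continuous_const) (fun t _ => hle t)
    ⟨s, trivial, (hle s).resolve_right hs⟩
    ⟨-t, trivial, (hle (-t)).resolve_left fun h' => ht <| by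
      rwa [neg_smul, le_neg] at h'⟩
  exact ⟨r, hr.1.antisymm hr.2⟩

lemma exists_complex_smul_eq_of_forall_mul_eq_zero {K M : Set C} (hK : IsIdeal K) (hM : IsIdeal M)
    (h : ∀ b ∈ K, ∀ c ∈ K, 0 ≤ b → 0 ≤ c → b * c = 0 → b ∈ M ∨ c ∈ M)
    {g x : C} (hgK : g ∈ K) (hg : 0 ≤ g) (hgM : g ∉ M) (hx : x ∈ K) :
    ∃ c : ℂ, hM.mk x = c • hM.mk g := by
  have hreal (y : C) (hy : IsSelfAdjoint y) (hyK : y ∈ K) : ∃ t : ℝ, hM.mk y = t • hM.mk g := by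
    refine exists_real_smul_eq_of_forall_le_or_le (map_nonneg hM.mk hg)
      (mt IsIdeal.mk_eq_zero_iff.1 hgM) fun t => ?_
    have hd : IsSelfAdjoint (y - t • g) := hy.sub (.smul (.all t) (.of_nonneg hg))
    have hdK : y - t • g ∈ K := hK.sub_mem hyK (hK.real_smul_mem t hgK)
    have hmk : hM.mk y - t • hM.mk g = hM.mk (y - t • g)⁺ - hM.mk (y - t • g)⁻ := by
      rw [← map_sub, CFC.posPart_sub_negPart _ hd, map_sub,
        map_real_smul hM.mk IsIdeal.continuous_mk]
    rcases h _ (hK.posPart_mem hdK) _ (hK.negPart_mem hdK) (CFC.posPart_nonneg _)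
      (CFC.negPart_nonneg _) (CFC.posPart_mul_negPart _) with hpos | hneg
    · left
      rw [← sub_nonpos, hmk, IsIdeal.mk_eq_zero_iff.2 hpos, zero_sub, neg_nonpos]
      exact map_nonneg hM.mk (CFC.negPart_nonneg _)
    · right
      rw [← sub_nonneg, hmk, IsIdeal.mk_eq_zero_iff.2 hneg, sub_zero]
      exact map_nonneg hM.mk (CFC.posPart_nonneg _)
  have hre : (ℜ x : C) ∈ K := by
    rw [realPart_apply_coe]
    exact hK.real_smul_mem _ (hK.add_mem hx (hK.star_mem hx))
  have him : (ℑ x : C) ∈ K := by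
    rw [imaginaryPart_apply_coe]
    exact hK.smul_mem _ (hK.real_smul_mem _ (hK.sub_mem hx (hK.star_mem hx)))
  obtain ⟨s, hs⟩ := hreal _ (ℜ x).2 hre
  obtain ⟨t, ht⟩ := hreal _ (ℑ x).2 him
  refine ⟨s + Complex.I * t, ?_⟩
  conv_lhs => rw [← realPart_add_I_smul_imaginaryPart x]
  rw [map_add, map_smul, hs, ht, add_smul, mul_smul, Complex.coe_smul, Complex.coe_smul]

lemma exists_mul_eq_zero_of_not_subset (hC : ¬ ∃ φ : C →ₗ[ℂ] ℂ, IsCharacter φ) {K M : Set C}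
    (hK : IsIdeal K) (hM : IsIdeal M) (hKM : ¬ K ⊆ M) :
    ∃ b ∈ K, ∃ c ∈ K, 0 ≤ b ∧ 0 ≤ c ∧ b * c = 0 ∧ b ∉ M ∧ c ∉ M := by
  by_contra! hcon
  obtain ⟨k, hkK, hkM⟩ := Set.not_subset.1 hKM
  have hmk : hM.mk k ≠ 0 := mt IsIdeal.mk_eq_zero_iff.1 hkM
  have hg0 : hM.mk (star k * k) ≠ 0 := by
    rw [map_mul, map_star]
    exact CStarRing.star_mul_self_ne_zero_iff _ |>.2 hmk
  have hgg : hM.mk (star k * k) * hM.mk (star k * k) ≠ 0 := by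
    nth_rw 1 [← (IsSelfAdjoint.star_mul_self k).star_eq]
    rw [map_star]
    exact CStarRing.star_mul_self_ne_zero_iff _ |>.2 hg0
  obtain ⟨φ, hφ⟩ := exists_isCharacter_of_forall_mul_eq_smul hgg <|
    hM.mk_surjective.forall.2 fun x => by
      rw [← map_mul]
      exact exists_complex_smul_eq_of_forall_mul_eq_zero hK hM
        (fun b hb c hc hb0 hc0 hbc => or_iff_not_imp_left.2 (hcon b hb c hc hb0 hc0 hbc))
        (hK.mul_mem_left _ hkK) (star_mul_self_nonneg k) (mt IsIdeal.mk_eq_zero_iff.2 hg0)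
        (hK.mul_mem_left _ (hK.mul_mem_left _ hkK))
  exact hC ⟨_, hφ.comp_mk⟩

lemma StronglyPurelyInfinite.not_exists_isCharacter (hC : StronglyPurelyInfinite C) :
    ¬ ∃ φ : C →ₗ[ℂ] ℂ, IsCharacter φ := by
  rintro ⟨φ, hφ⟩
  refine hφ.2 (LinearMap.ext_on CStarAlgebra.span_nonneg fun a ha => ?_)
  exact hφ.apply_eq_zero_of_doublyCuntzBelow (.of_nonneg ha)
    (ProperlyInfinite.doublyCuntzBelow ha (hC a a ha ha))

end Order

end Characters

lemma exists_isSelfAdjoint_mul_one_sub_mul_eq_one {D : Type*} [CStarAlgebra D] {d : D}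
    (hd : IsSelfAdjoint d) (hd1 : ‖d‖ < 1) :
    ∃ t, IsSelfAdjoint t ∧ t * (1 - d) * t = 1 ∧ ∀ e, Commute e d → Commute e t := by
  let : PartialOrder D := CStarAlgebra.spectralOrder D
  have : StarOrderedRing D := CStarAlgebra.spectralOrderedRing D
  have hpos : IsStrictlyPositive (1 - d) := by
    have hle := (hd.le_algebraMap_norm_self.trans (algebraMap_mono D hd1.le)).trans_eq
      (map_one (algebraMap ℝ D))
    refine ⟨sub_nonneg.2 hle, isUnit_one_sub_of_norm_lt_one hd1⟩
  exact ⟨(1 - d) ^ (-(1 / 2) : ℝ), .of_nonneg CFC.rpow_nonneg,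
    CFC.conjugate_rpow_neg_one_half (1 - d),
    fun e he => (((Commute.one_right e).sub_right he).symm.cfc_nnreal _).symm⟩

section ExactOrthogonality

variable {C : Type*} [NonUnitalCStarAlgebra C] {p : C}

lemma IsProjection.norm_le_one (hp : IsProjection p) : ‖p‖ ≤ 1 := by
  have hsq : ‖p‖ = ‖p‖ * ‖p‖ := by
    nth_rw 1 [← hp.2, ← hp.1]
    rw [CStarRing.norm_star_mul_self]
  nlinarith [norm_nonneg p]

lemma IsProjection.norm_le_two_of_star_mul_mul_eq (hp : IsProjection p) {c z : C}
    (h : ‖p - z‖ ≤ 1 / 2) (hpc : p * c = c) (hczc : star c * z * c = p) : ‖c‖ ≤ 2 := by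
  have hsplit : star c * c = p + star c * (p - z) * c := by
    rw [mul_sub, sub_mul, hczc, mul_assoc _ p c, hpc]
    abel
  have hle : ‖c‖ * ‖c‖ ≤ 1 + ‖c‖ * (1 / 2) * ‖c‖ := by
    rw [← CStarRing.norm_star_mul_self, hsplit]
    refine (norm_add_le _ _).trans (add_le_add hp.norm_le_one (norm_mul₃_le.trans ?_))
    rw [norm_star]
    gcongr
  nlinarith

lemma IsProjection.exists_star_mul_mul_eq (hp : IsProjection p) {z : C} (hz : IsSelfAdjoint z)
    (hpzp : p * z * p = z) (h : ‖p - z‖ ≤ 1 / 2) :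
    ∃ c, c * p = c ∧ star c * z * c = p ∧ ‖c‖ ≤ 2 := by
  have hpz : p * z = z := by rw [← hpzp]; simp only [← mul_assoc, hp.2]
  have hzp : z * p = z := by rw [← hpzp]; simp only [mul_assoc, hp.2]
  obtain ⟨t, ht, htt, htc⟩ := exists_isSelfAdjoint_mul_one_sub_mul_eq_one
    ((IsSelfAdjoint.sub hp.1 hz).inr ℂ) (by rw [Unitization.norm_inr]; linarith)
  have hpt : Commute (p : Unitization ℂ C) t := htc _ <| by
    rw [commute_iff_eq, ← Unitization.inr_mul, ← Unitization.inr_mul, mul_sub, sub_mul, hpz, hzp]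
  have hpp : (p : Unitization ℂ C) * p = p := by rw [← Unitization.inr_mul, hp.2]
  let c : C := t.fst • p + t.snd * p
  have hc : (c : Unitization ℂ C) = t * p := by
    ext <;> simp [c]
  have hpc : p * c = c := by
    refine Unitization.inr_injective (R := ℂ) ?_
    rw [Unitization.inr_mul, hc, ← mul_assoc, hpt.eq, mul_assoc, hpp]
  have hczc : star c * z * c = p := by
    refine Unitization.inr_injective (R := ℂ) ?_
    have hz' : (z : Unitization ℂ C) = p * (1 - (p - z : C)) := by
      rw [mul_sub, mul_one, ← Unitization.inr_mul, mul_sub, hp.2, hpz, ← Unitization.inr_sub,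
        sub_sub_cancel]
    have hc' : star (c : Unitization ℂ C) = p * t := by
      rw [hc, star_mul, ht.star_eq, ← Unitization.inr_star, hp.1]
    calc ((star c * z * c : C) : Unitization ℂ C)
        = p * t * (p * (1 - (p - z : C))) * (t * p) := by
          rw [Unitization.inr_mul, Unitization.inr_mul, Unitization.inr_star, hc', hc, ← hz']
      _ = p * p * (t * (1 - (p - z : C)) * t) * p := by
          simp only [mul_assoc, hpt.symm.left_comm]
      _ = p := by rw [htt, mul_one, hpp, hpp]
  exact ⟨c, by simp only [c, add_mul, smul_mul_assoc, mul_assoc, hp.2], hczc,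
    hp.norm_le_two_of_star_mul_mul_eq h hpc hczc⟩

lemma IsProjection.exists_norm_le_two_star_mul_mul_eq (hp : IsProjection p) {h x : C}
    (hh : IsSelfAdjoint h) (hx : ‖p - star x * h * x‖ ≤ 1 / 2) :
    ∃ c, ‖c‖ ≤ 2 ∧ c * p = c ∧ star (x * p * c) * h * (x * p * c) = p := by
  have hconj : p - star (x * p) * h * (x * p) = p * (p - star x * h * x) * p := by
    simp only [star_mul, hp.1, mul_sub, sub_mul, hp.2, mul_assoc]
  have hpp := hp.norm_le_one
  obtain ⟨c, hcp, hc, hcn⟩ := hp.exists_star_mul_mul_eq (hh.conjugate' (x * p))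
    (by simp only [star_mul, hp.1, mul_assoc, hp.2]; simp only [← mul_assoc, hp.2]) <| by
      rw [hconj]
      calc ‖p * (p - star x * h * x) * p‖ ≤ ‖p‖ * ‖p - star x * h * x‖ * ‖p‖ := norm_mul₃_le
        _ ≤ 1 * (1 / 2) * 1 := by gcongr
        _ = 1 / 2 := by norm_num
  exact ⟨c, hcn, hcp, by simpa only [star_mul, mul_assoc] using hc⟩

lemma star_mul_mul_sub_eq_zero {h x y : C}
    (hxy : star x * h * x * (star x * h * y) = star x * h * y) :
    star x * h * (y - x * (star x * h * y)) = 0 := by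
  rw [mul_sub, ← mul_assoc _ x, hxy, sub_self]

lemma star_sub_mul_mul_sub {h x y : C} (hh : IsSelfAdjoint h)
    (hxy : star x * h * x * (star x * h * y) = star x * h * y) :
    star (y - x * (star x * h * y)) * h * (y - x * (star x * h * y)) =
      star y * h * y - star (star x * h * y) * (star x * h * y) := by
  have hyx : star y * h * x = star (star x * h * y) := by
    simp only [star_mul, star_star, hh.star_eq, mul_assoc]
  have hzero := star_mul_mul_sub_eq_zero hxy
  set b := star x * h * y
  have hexpand : star (y - x * b) * h * (y - x * b) =
      star y * h * (y - x * b) - star b * (star x * h * (y - x * b)) := by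
    simp only [star_sub, star_mul, sub_mul, mul_assoc]
  rw [hexpand, hzero, mul_zero, sub_zero, mul_sub, ← mul_assoc _ x b, hyx]

/-- Normalise `x`, subtract from `y` its component along `x`, and normalise the remainder. -/
lemma IsProjection.exists_orthogonal_of_doublyCuntzBelow (hp : IsProjection p) {h : C}
    (hh : IsSelfAdjoint h) (hph : DoublyCuntzBelow p h) :
    ∃ x y, x * p = x ∧ y * p = y ∧ star x * h * x = p ∧ star y * h * y = p ∧
      star x * h * y = 0 := by
  obtain ⟨x₀, y₀, hx₀, hy₀, hxy₀⟩ := doublyCuntzBelow_iff.1 hph (1 / 8) (by norm_num)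
  obtain ⟨c, hcn, hcp, hc⟩ := hp.exists_norm_le_two_star_mul_mul_eq hh (hx₀.le.trans (by norm_num))
  set x := x₀ * p * c
  have hxp : x * p = x := by simp only [x, mul_assoc, hcp]
  have hpx : p * star x = star x := by rw [← hp.1, ← star_mul, hxp]
  have hb : ‖star x * h * y₀‖ ≤ 1 / 4 := by
    calc ‖star x * h * y₀‖ = ‖star c * p * (star x₀ * h * y₀)‖ := by
          simp only [x, star_mul, hp.1, mul_assoc]
      _ ≤ ‖star c‖ * ‖p‖ * ‖star x₀ * h * y₀‖ := norm_mul₃_le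
      _ ≤ 2 * 1 * (1 / 8) := by
          rw [norm_star]
          gcongr
          exact hp.norm_le_one
      _ = 1 / 4 := by norm_num
  have hpb : star x * h * x * (star x * h * y₀) = star x * h * y₀ := by
    rw [hc, ← mul_assoc, ← mul_assoc, hpx]
  have hxb := star_mul_mul_sub_eq_zero hpb
  have hy := star_sub_mul_mul_sub hh hpb
  set b := star x * h * y₀
  obtain ⟨d, -, hdp, hd⟩ := hp.exists_norm_le_two_star_mul_mul_eq hh (x := y₀ - x * b) <| by
    rw [hy, sub_sub_eq_add_sub, add_sub_right_comm]
    refine (norm_add_le _ _).trans ?_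
    rw [CStarRing.norm_star_mul_self]
    nlinarith [norm_nonneg b]
  refine ⟨x, (y₀ - x * b) * p * d, hxp, by simp only [mul_assoc, hdp], hc, hd, ?_⟩
  simp only [← mul_assoc] at hxb ⊢
  rw [hxb, zero_mul, zero_mul]

end ExactOrthogonality

section AbsorbingProjections

variable {C : Type*} [NonUnitalCStarAlgebra C] [PartialOrder C]

/-- `p` absorbs the positive elements of the ideal it generates: each is Cuntz below `p`. -/
def IsAbsorbing (p : C) : Prop := ∀ g, 0 ≤ g → g ∈ idealGen {p} → CuntzBelow g p

/-- Every nonzero positive element dominates two orthogonal copies of a nonzero absorbing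
projection. An algebra all of whose quotients have this property is strongly purely infinite. -/
def HasAbsorbingProjections (C : Type*) [NonUnitalCStarAlgebra C] [PartialOrder C] : Prop :=
  ∀ h : C, 0 ≤ h → h ≠ 0 →
    ∃ p, p ≠ 0 ∧ IsProjection p ∧ IsAbsorbing p ∧ DoublyCuntzBelow p h

variable [StarOrderedRing C] {a b : C} {κ : ℝ}

lemma smul_cutDown_conj_le (hκ : 0 ≤ κ) (ha : 0 ≤ a) :
    κ • (cutDown κ a * a * cutDown κ a) ≤ cutDown κ a * (a * a) * cutDown κ a := by
  let σ : ℝ → ℝ := fun t => max (t - κ) 0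
  have : σ 0 = 0 := by simpa [σ] using hκ
  have hl : κ • (cutDown κ a * a * cutDown κ a) = cfcₙ (fun t => κ • (σ t * t * σ t)) a := by
    rw [cfcₙ_smul κ (fun t => σ t * t * σ t) a, cfcₙ_mul (fun t => σ t * t) σ a,
      cfcₙ_mul σ (fun t => t) a, cfcₙ_id' ℝ a, cutDown]
  have hr : cutDown κ a * (a * a) * cutDown κ a = cfcₙ (fun t => σ t * (t * t) * σ t) a := by
    rw [cfcₙ_mul (fun t => σ t * (t * t)) σ a, cfcₙ_mul σ (fun t => t * t) a,
      cfcₙ_mul (fun t => t) (fun t => t) a, cfcₙ_id' ℝ a, cutDown]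
  rw [hl, hr]
  refine cfcₙ_mono fun t ht => ?_
  have ht0 : 0 ≤ t := quasispectrum_nonneg_of_nonneg a ha t ht
  rcases le_total t κ with h | h
  · simp [σ, h]
  · have hpos : 0 ≤ (t - κ) * (t * (t - κ)) * (t - κ) := by
      have := sub_nonneg.2 h
      positivity
    simp only [σ, max_eq_left (sub_nonneg.2 h), smul_eq_mul]
    linarith

lemma cutDown_conj_ne_zero (hκ : 0 ≤ κ) (ha : 0 ≤ a) (hσ : cutDown κ a ≠ 0) :
    cutDown κ a * a * cutDown κ a ≠ 0 := by
  have hs : IsSelfAdjoint (cutDown κ a) := .of_nonneg (cutDown_nonneg κ a)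
  intro h0
  have hle : cutDown κ a * cutDown κ a * cutDown κ a ≤ 0 := by
    have := star_left_conjugate_le_conjugate (cutDown_le hκ ha) (cutDown κ a)
    rwa [hs.star_eq, h0] at this
  have h3 : cutDown κ a * cutDown κ a * cutDown κ a = 0 :=
    hle.antisymm (by simpa only [hs.star_eq] using
      star_left_conjugate_nonneg (cutDown_nonneg κ a) (cutDown κ a))
  have h2 : cutDown κ a * cutDown κ a = 0 := by
    rw [← CStarRing.star_mul_self_eq_zero_iff, star_mul, hs.star_eq, ← mul_assoc, h3, zero_mul]
  refine hσ ?_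
  rwa [← CStarRing.star_mul_self_eq_zero_iff, hs.star_eq]

lemma conj_ne_zero (ha : 0 ≤ a) (hb : IsSelfAdjoint b) (hab : a * b ≠ 0) : b * a * b ≠ 0 := by
  obtain ⟨r, rfl⟩ := CStarAlgebra.nonneg_iff_eq_star_mul_self.1 ha
  intro h0
  have hr : r * b = 0 := by
    rw [← CStarRing.star_mul_self_eq_zero_iff, star_mul, hb.star_eq, ← h0]
    simp only [mul_assoc]
  exact hab (by rw [mul_assoc, hr, mul_zero])

/-- The common lower bound is `σ h σ` for `h = b a b` and `σ` a cut-down of `h`: with `v = b σ` and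
`w = σ` the cross term is `σ h σ` itself, while `h ≤ ‖a‖ b²` and `h² ≤ ‖b²‖ b a² b`. -/
lemma exists_conj_le_of_mul_ne_zero (ha : 0 ≤ a) (hb : 0 ≤ b) (hab : a * b ≠ 0) :
    ∃ (v w k : C) (c : ℝ), 0 ≤ c ∧ 0 ≤ k ∧ k ≠ 0 ∧ star (a * v) * (b * w) = k ∧
      k ≤ c • (star (a * v) * (a * v)) ∧ k ≤ c • (star (b * w) * (b * w)) := by
  have hbs : IsSelfAdjoint b := .of_nonneg hb
  have has : IsSelfAdjoint a := .of_nonneg ha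
  set h := b * a * b with h_def
  have hh : 0 ≤ h := hbs.conjugate_nonneg ha
  obtain ⟨η, hη, hσ⟩ := IsIdeal.singleton_zero.exists_cutDown_notMem hh (conj_ne_zero ha hbs hab)
  set σ := cutDown η h
  have hσs : star σ = σ := (IsSelfAdjoint.of_nonneg (cutDown_nonneg η h)).star_eq
  have hmono {c c' : ℝ} {x : C} (hcc : c ≤ c') (hx : 0 ≤ x) : c • x ≤ c' • x :=
    smul_le_smul_of_nonneg_right hcc hx
  refine ⟨b * σ, σ, σ * h * σ, ‖a‖ + η⁻¹ * ‖b * b‖, by positivity, ?_,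
    cutDown_conj_ne_zero hη.le hh hσ, ?_, ?_, ?_⟩
  · simpa only [hσs] using star_left_conjugate_nonneg hh σ
  · simp only [star_mul, has.star_eq, hbs.star_eq, hσs, h_def, mul_assoc]
  · have hsq : h * h ≤ ‖b * b‖ • (b * (a * a) * b) := by
      have := CStarAlgebra.star_left_conjugate_le_norm_smul (a := a * b) (b := b * b)
        (hb := .of_nonneg hbs.mul_self_nonneg)
      simpa only [h_def, star_mul, has.star_eq, hbs.star_eq, mul_assoc] using this
    have hle := (smul_cutDown_conj_le hη.le hh).trans
      (by simpa only [hσs] using star_left_conjugate_le_conjugate hsq σ)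
    calc σ * h * σ = η⁻¹ • η • (σ * h * σ) := by rw [smul_smul, inv_mul_cancel₀ hη.ne', one_smul]
      _ ≤ η⁻¹ • (σ * (‖b * b‖ • (b * (a * a) * b)) * σ) :=
          smul_le_smul_of_nonneg_left hle (inv_nonneg.2 hη.le)
      _ = (η⁻¹ * ‖b * b‖) • (star (a * (b * σ)) * (a * (b * σ))) := by
          simp only [star_mul, has.star_eq, hbs.star_eq, hσs, mul_smul_comm, smul_mul_assoc,
            smul_smul, mul_assoc]
      _ ≤ _ := hmono (le_add_of_nonneg_left (norm_nonneg a)) (star_mul_self_nonneg _)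
  · calc σ * h * σ ≤ σ * (‖a‖ • (b * b)) * σ := by
          simpa only [hσs] using
            star_left_conjugate_le_conjugate (conj_le_smul_of_norm_le has hbs le_rfl) σ
      _ = ‖a‖ • (star (b * σ) * (b * σ)) := by
          simp only [star_mul, hbs.star_eq, hσs, mul_smul_comm, smul_mul_assoc, mul_assoc]
      _ ≤ _ := hmono (le_add_of_nonneg_right (by positivity)) (star_mul_self_nonneg _)

lemma HasAbsorbingProjections.exists_orthogonal (hC : HasAbsorbingProjections C) (ha : 0 ≤ a)
    (hb : 0 ≤ b) (hab : a * b ≠ 0) :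
    ∃ p v w, p ≠ 0 ∧ IsProjection p ∧ IsAbsorbing p ∧ a * v * p = a * v ∧ b * w * p = b * w ∧
      p ≤ star (a * v) * (a * v) ∧ p ≤ star (b * w) * (b * w) ∧ star (a * v) * (b * w) = 0 := by
  obtain ⟨v, w, k, c, hc, hk, hk0, hvw, hv, hw⟩ := exists_conj_le_of_mul_ne_zero ha hb hab
  obtain ⟨p, hp0, hp, hpa, hpk⟩ := hC k hk hk0
  obtain ⟨x, y, hxp, hyp, hx, hy, hxy⟩ := hp.exists_orthogonal_of_doublyCuntzBelow (.of_nonneg hk)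
    hpk
  have hle {d z : C} (hd : k ≤ c • (star d * d)) (hz : star z * k * z = p) :
      p ≤ star (√c • (d * z)) * (√c • (d * z)) := by
    have := star_left_conjugate_le_conjugate hd z
    rw [hz] at this
    refine this.trans_eq ?_
    simp only [star_smul, star_trivial, smul_mul_assoc, mul_smul_comm, smul_smul,
      Real.mul_self_sqrt hc, star_mul, mul_assoc]
  refine ⟨p, √c • (v * x), √c • (w * y), hp0, hp, hpa, ?_, ?_, ?_, ?_, ?_⟩
  · simp only [mul_smul_comm, smul_mul_assoc, mul_assoc, hxp]
  · simp only [mul_smul_comm, smul_mul_assoc, mul_assoc, hyp]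
  · simpa only [mul_smul_comm, mul_assoc] using hle hv hx
  · simpa only [mul_smul_comm, mul_assoc] using hle hw hy
  · have hcross : star (a * (v * x)) * (b * (w * y)) = 0 := by
      rw [← hxy, ← hvw]
      simp only [star_mul, mul_assoc]
    rw [mul_smul_comm, mul_smul_comm, star_smul, smul_mul_smul_comm, hcross, smul_zero]

end AbsorbingProjections

section SeparatedModulo

variable {C : Type*} [NonUnitalCStarAlgebra C] {K : Set C} {a b x : C} {ε : ℝ}

lemma IsIdeal.mk_mem_thickening_iff (hK : IsIdeal K) {M : Set hK.Quotient} :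
    hK.mk x ∈ Metric.thickening ε M ↔ x ∈ Metric.thickening ε (hK.mk ⁻¹' M) := by
  simp only [Metric.mem_thickening_iff, dist_eq_norm]
  constructor
  · rintro ⟨m, hm, hxm⟩
    obtain ⟨y, rfl⟩ := hK.mk_surjective m
    rw [← map_sub, hK.norm_mk_lt_iff] at hxm
    obtain ⟨k, hk, hxk⟩ := hxm
    refine ⟨y + k, ?_, by rwa [← sub_sub]⟩
    rwa [Set.mem_preimage, map_add, hK.mk_eq_zero_iff.2 hk, add_zero]
  · rintro ⟨y, hy, hxy⟩
    exact ⟨hK.mk y, hy, by rw [← map_sub]; exact (hK.norm_mk_le _).trans_lt hxy⟩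

variable [PartialOrder C]

/-- `a` and `b` are separated up to an error `ε` modulo `K`. The copies of `a` and `b` are only
required to dominate up to the error, because domination, unlike approximate equality, is kept
when further positive summands are added to the copies. -/
def SeparatedModulo (ε : ℝ) (K : Set C) (a b : C) : Prop :=
  ∃ c d e f, e ∈ Metric.thickening ε K ∧ f ∈ Metric.thickening ε K ∧
    star (a * c) * (b * d) ∈ Metric.thickening ε K ∧
    a ≤ star (a * c) * (a * c) + e ∧ b ≤ star (b * d) * (b * d) + f

lemma SeparatedModulo.exists_of_isChain {S : Set (Set C)}
    (hchain : IsChain (· ⊆ ·) S) (h : SeparatedModulo ε (closure (⋃₀ S)) a b) :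
    ∃ K ∈ S, SeparatedModulo ε K a b := by
  obtain ⟨c, d, e, f, he, hf, hcd, hac, hbd⟩ := h
  have hthick {z : C} (hz : z ∈ Metric.thickening ε (closure (⋃₀ S))) :
      ∃ K ∈ S, z ∈ Metric.thickening ε K := by
    rw [Metric.thickening_closure, Metric.mem_thickening_iff] at hz
    obtain ⟨k, ⟨K, hK, hkK⟩, hzk⟩ := hz
    exact ⟨K, hK, Metric.mem_thickening_iff.2 ⟨k, hkK, hzk⟩⟩
  obtain ⟨K₁, hK₁, he⟩ := hthick he
  obtain ⟨K₂, hK₂, hf⟩ := hthick hf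
  obtain ⟨K₃, hK₃, hcd⟩ := hthick hcd
  obtain ⟨K₄, hK₄, h₁, h₂⟩ := hchain.directedOn K₁ hK₁ K₂ hK₂
  obtain ⟨K, hK, h₄, h₃⟩ := hchain.directedOn K₄ hK₄ K₃ hK₃
  exact ⟨K, hK, c, d, e, f, Metric.thickening_subset_of_subset ε (h₁.trans h₄) he,
    Metric.thickening_subset_of_subset ε (h₂.trans h₄) hf,
    Metric.thickening_subset_of_subset ε h₃ hcd, hac, hbd⟩

variable [StarOrderedRing C]

lemma separatedModulo_preimage_mk_iff (hK : IsIdeal K) {M : Set hK.Quotient} :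
    SeparatedModulo ε (hK.mk ⁻¹' M) a b ↔ SeparatedModulo ε M (hK.mk a) (hK.mk b) := by
  constructor
  · rintro ⟨c, d, e, f, he, hf, hcd, hac, hbd⟩
    have hmap {g c e : C} (h : g ≤ star (g * c) * (g * c) + e) :
        hK.mk g ≤ star (hK.mk g * hK.mk c) * (hK.mk g * hK.mk c) + hK.mk e := by
      rw [← sub_nonneg] at h ⊢
      simpa only [map_sub, map_add, map_mul, map_star] using map_nonneg hK.mk h
    refine ⟨hK.mk c, hK.mk d, hK.mk e, hK.mk f, hK.mk_mem_thickening_iff.2 he,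
      hK.mk_mem_thickening_iff.2 hf, ?_, hmap hac, hmap hbd⟩
    simpa only [map_mul, map_star] using hK.mk_mem_thickening_iff.2 hcd
  · rintro ⟨c, d, e, f, he, hf, hcd, hac, hbd⟩
    obtain ⟨c, rfl⟩ := hK.mk_surjective c
    obtain ⟨d, rfl⟩ := hK.mk_surjective d
    simp only [← map_mul, ← map_star] at hcd hac hbd
    obtain ⟨e, rfl, hac'⟩ := hK.exists_mk_eq_of_mk_le_mk_add hac
    obtain ⟨f, rfl, hbd'⟩ := hK.exists_mk_eq_of_mk_le_mk_add hbd
    exact ⟨c, d, e, f, hK.mk_mem_thickening_iff.1 he, hK.mk_mem_thickening_iff.1 hf,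
      hK.mk_mem_thickening_iff.1 hcd, hac', hbd'⟩

lemma exists_norm_sub_star_mul_self_lt (ha : 0 ≤ a) (hε : 0 < ε) :
    ∃ c, ‖a - star (a * c) * (a * c)‖ < ε := by
  have hm (t : ℝ) : 0 < max t (ε / 2) := lt_max_of_lt_right (half_pos hε)
  let r : ℝ → ℝ := fun t => √t / max t (ε / 2)
  have hr : Continuous r :=
    Real.continuous_sqrt.div (continuous_id.max continuous_const) fun t => (hm t).ne'
  have : r 0 = 0 := by simp [r]
  have hrs : IsSelfAdjoint (cfcₙ r a) := cfcₙ_predicate r a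
  refine ⟨cfcₙ r a, lt_of_le_of_lt ?_ (half_lt_self hε)⟩
  have heq : a - star (a * cfcₙ r a) * (a * cfcₙ r a) =
      cfcₙ (fun t => t - (r t * t) * (t * r t)) a := by
    rw [cfcₙ_sub (fun t => t) (fun t => (r t * t) * (t * r t)) a,
      cfcₙ_mul (fun t => r t * t) (fun t => t * r t) a, cfcₙ_mul r (fun t => t) a,
      cfcₙ_mul (fun t => t) r a, cfcₙ_id' ℝ a, star_mul, hrs.star_eq,
      (IsSelfAdjoint.of_nonneg ha).star_eq]
  rw [heq]
  refine norm_cfcₙ_le fun t ht => ?_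
  have ht0 : 0 ≤ t := quasispectrum_nonneg_of_nonneg a ha t ht
  have hrt : (r t * t) * (t * r t) = t * (t / max t (ε / 2)) ^ 2 := by
    simp only [r]
    field_simp
    rw [Real.sq_sqrt ht0, ← pow_succ']
  rw [hrt, Real.norm_eq_abs]
  rcases le_total (ε / 2) t with h | h
  · rw [max_eq_left h, div_self ((half_pos hε).trans_le h).ne']
    simpa using (half_pos hε).le
  · have h1 : (t / max t (ε / 2)) ^ 2 ≤ 1 :=
      pow_le_one₀ (div_nonneg ht0 (hm t).le) ((div_le_one (hm t)).2 (le_max_left _ _))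
    rw [abs_of_nonneg (by nlinarith)]
    nlinarith [sq_nonneg (t / max t (ε / 2))]

lemma separatedModulo_zero_of_mul_eq_zero (ha : 0 ≤ a) (hb : 0 ≤ b) (hab : a * b = 0)
    (hε : 0 < ε) : SeparatedModulo ε {0} a b := by
  obtain ⟨c, hc⟩ := exists_norm_sub_star_mul_self_lt ha hε
  obtain ⟨d, hd⟩ := exists_norm_sub_star_mul_self_lt hb hε
  have hthick {z : C} (hz : ‖z‖ < ε) : z ∈ Metric.thickening ε {0} :=
    Metric.mem_thickening_iff.2 ⟨0, rfl, by rwa [dist_zero_right]⟩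
  refine ⟨c, d, _, _, hthick hc, hthick hd, hthick ?_, (add_sub_cancel _ _).ge,
    (add_sub_cancel _ _).ge⟩
  rw [star_mul, (IsSelfAdjoint.of_nonneg ha).star_eq, mul_assoc, ← mul_assoc a, hab, zero_mul,
    mul_zero, norm_zero]
  exact hε

lemma StronglyPurelyInfinite.of_separatedModulo_zero
    (h : ∀ a b : C, 0 ≤ a → 0 ≤ b → ∀ ε : ℝ, 0 < ε → SeparatedModulo ε {0} a b) :
    StronglyPurelyInfinite C := by
  intro a b ha hb ε hε
  obtain ⟨c, d, e, f, he, hf, hcd, hac, hbd⟩ := h a b ha hb ε hε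
  simp only [Metric.thickening_singleton, mem_ball_zero_iff] at he hf hcd
  obtain ⟨v, hv, hv'⟩ := exists_norm_sub_conj_le ha (star_mul_self_nonneg _) hε hac he.le
  obtain ⟨w, hw, hw'⟩ := exists_norm_sub_conj_le hb (star_mul_self_nonneg _) hε hbd hf.le
  refine ⟨a * c * v, b * d * w, ⟨c * v, mul_assoc _ _ _⟩, ⟨d * w, mul_assoc _ _ _⟩, ?_, ?_, ?_⟩
  · rw [norm_sub_rev]
    simpa only [star_mul, mul_assoc] using hv'
  · rw [norm_sub_rev]
    simpa only [star_mul, mul_assoc] using hw'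
  · calc ‖star (a * c * v) * (b * d * w)‖ = ‖star v * (star (a * c) * (b * d)) * w‖ := by
          simp only [star_mul, mul_assoc]
      _ ≤ ‖v‖ * ‖star (a * c) * (b * d)‖ * ‖w‖ := by
          simpa only [norm_star] using norm_mul₃_le (a := star v)
      _ ≤ 1 * ε * 1 := by gcongr
      _ = ε := by ring

end SeparatedModulo

section ExtensionStep

variable {C : Type*} [NonUnitalCStarAlgebra C]
  {K : Set C} {F : Filter C} {a b p u v w x e : C} {δ ε τ R : ℝ}

lemma IsIdeal.eventually_smul_mem_thickening (hK : IsIdeal K) (hx : x ∈ Metric.thickening ε K) :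
    ∀ᶠ δ : ℝ in 𝓝 0, (1 + δ) • x ∈ Metric.thickening (ε - δ) K := by
  obtain ⟨k, hk, hxk⟩ := Metric.mem_thickening_iff.1 hx
  have hlim : Tendsto (fun δ : ℝ => dist ((1 + δ) • x) ((1 + δ) • k) + δ) (𝓝 0) (𝓝 (dist x k)) := by
    have : Continuous fun δ : ℝ => dist ((1 + δ) • x) ((1 + δ) • k) + δ := by fun_prop
    simpa using this.tendsto 0
  filter_upwards [hlim.eventually_lt_const hxk] with δ hδ
  exact Metric.mem_thickening_iff.2 ⟨_, hK.real_smul_mem _ hk, lt_sub_iff_add_lt.2 hδ⟩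

variable [PartialOrder C]

lemma IsAbsorbing.exists_norm_sub_star_mul_self_le (hpa : IsAbsorbing p) (hp : IsProjection p)
    {g : C} (hg : 0 ≤ g) (hgp : g ∈ idealGen {p}) (hτ : 0 < τ) :
    ∃ κ, p * κ = κ ∧ ‖g - star κ * κ‖ ≤ τ := by
  obtain ⟨z, hz⟩ := hpa g hg hgp τ hτ
  refine ⟨p * z, by rw [← mul_assoc, hp.2], ?_⟩
  rw [star_mul, hp.1, mul_assoc, ← mul_assoc p, hp.2, ← mul_assoc]
  exact hz.le

variable [StarOrderedRing C]

lemma star_add_mul_add_le (hδ : 0 < δ) (x y : C) :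
    star (x + y) * (x + y) ≤ (1 + δ) • (star x * x) + (1 + δ⁻¹) • (star y * y) := by
  have hdiff : (1 + δ) • (star x * x) + (1 + δ⁻¹) • (star y * y) - star (x + y) * (x + y) =
      δ • (star (x - δ⁻¹ • y) * (x - δ⁻¹ • y)) := by
    simp only [star_add, star_sub, star_smul, star_trivial, add_mul, mul_add, sub_mul, mul_sub,
      smul_mul_assoc, mul_smul_comm, smul_sub, smul_smul, add_smul, one_smul,
      mul_inv_cancel₀ hδ.ne']
    rw [← mul_assoc, mul_inv_cancel₀ hδ.ne', one_mul]
    abel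
  rw [← sub_nonneg, hdiff]
  exact smul_nonneg hδ.le (star_mul_self_nonneg _)

lemma le_oneSubConj_add_conj (hδ : 0 < δ) (ha : 0 ≤ a) (hu : IsSelfAdjoint u) :
    a ≤ (1 + δ) • oneSubConj u a + (1 + δ⁻¹) • (u * a * u) := by
  obtain ⟨r, rfl⟩ := CStarAlgebra.nonneg_iff_eq_star_mul_self.1 ha
  have h := star_add_mul_add_le hδ (r - r * u) (r * u)
  rw [sub_add_cancel, star_sub_mul_mul_sub_mul hu, star_mul, hu.star_eq] at h
  simpa only [mul_assoc] using h

namespace IsApproximateUnitOf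

lemma eventually_norm_star_sub_mul_le (hF : IsApproximateUnitOf F K) (hK : IsIdeal K)
    (hv : v ∈ K) (x : C) (hτ : 0 < τ) (R : ℝ) :
    ∀ᶠ u in F, ∀ κ, ‖κ‖ ≤ R → ‖star (x - x * u) * (v * κ)‖ ≤ τ := by
  have hlim : Tendsto (fun u => ‖star x * v - u * (star x * v)‖ * R) F (𝓝 0) := by
    simpa using (((hF.tendsto_right _ (hK.mul_mem_left (star x) hv)).const_sub
      (star x * v)).norm.mul_const R)
  filter_upwards [hF.eventually, hlim.eventually_lt_const hτ] with u ⟨_, hu, _⟩ hlt κ hκ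
  have hfactor : star (x - x * u) * (v * κ) = (star x * v - u * (star x * v)) * κ := by
    rw [star_sub, star_mul, (IsSelfAdjoint.of_nonneg hu).star_eq]
    noncomm_ring
  rw [hfactor]
  exact (norm_mul_le _ _).trans ((mul_le_mul_of_nonneg_left hκ (norm_nonneg _)).trans hlt.le)

lemma eventually_norm_star_mul_le (hF : IsApproximateUnitOf F K) (hK : IsIdeal K)
    (hv : v ∈ K) (hw : w ∈ K) (hvw : star v * w = 0) (x y : C) (hτ : 0 < τ) (R : ℝ) :
    ∀ᶠ u in F, ∀ κ l, ‖κ‖ ≤ R → ‖l‖ ≤ R →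
      ‖star (x - x * u + v * κ) * (y - y * u + w * l)‖ ≤ ‖oneSubConj u (star x * y)‖ + τ := by
  filter_upwards [hF.eventually, hF.eventually_norm_star_sub_mul_le hK hw x (half_pos hτ) R,
    hF.eventually_norm_star_sub_mul_le hK hv y (half_pos hτ) R] with u ⟨_, hu, _⟩ hxw hyv κ l hκ hl
  have hexpand : star (x - x * u + v * κ) * (y - y * u + w * l) =
      oneSubConj u (star x * y) + star (x - x * u) * (w * l) +
        star (star (y - y * u) * (v * κ)) := by
    have hvl : star (v * κ) * (w * l) = 0 := by
      rw [star_mul, mul_assoc, ← mul_assoc (star v), hvw, zero_mul, mul_zero]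
    rw [← star_sub_mul_mul_sub_mul (.of_nonneg hu), star_mul (star _) (v * κ), star_star, star_add,
      add_mul, mul_add, mul_add, hvl, add_zero]
  rw [hexpand]
  calc _ ≤ ‖oneSubConj u (star x * y)‖ + ‖star (x - x * u) * (w * l)‖ +
        ‖star (star (y - y * u) * (v * κ))‖ := norm_add₃_le
    _ ≤ ‖oneSubConj u (star x * y)‖ + τ / 2 + τ / 2 := by
        gcongr
        · exact hxw l hl
        · rw [norm_star]; exact hyv κ hκ
    _ = _ := by ring

end IsApproximateUnitOf

lemma le_star_mul_self_add_of_le (hδ : 0 < δ) (ha : 0 ≤ a) (hu : IsSelfAdjoint u)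
    (hax : (1 + δ) • a ≤ star x * x + e) {κ : C} (hκ : p * κ = κ) (hv : p ≤ star v * v) :
    a ≤ star (x - x * u + v * κ) * (x - x * u + v * κ) +
      (oneSubConj u e + ((1 + δ⁻¹) • (u * a * u) - star κ * κ) -
        (star (x - x * u) * (v * κ) + star (star (x - x * u) * (v * κ)))) := by
  have hκv : star κ * κ ≤ star (v * κ) * (v * κ) := by
    have := star_left_conjugate_le_conjugate hv κ
    rwa [mul_assoc, hκ, ← mul_assoc, ← star_mul, mul_assoc] at this
  have hosc : (1 + δ) • oneSubConj u a ≤ star (x - x * u) * (x - x * u) + oneSubConj u e := by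
    have := oneSubConj_mono hu hax
    rw [oneSubConj_add, ← star_sub_mul_mul_sub_mul hu] at this
    convert this using 1
    simp only [oneSubConj, smul_add, smul_sub, mul_smul_comm, smul_mul_assoc]
  calc a ≤ (1 + δ) • oneSubConj u a + (1 + δ⁻¹) • (u * a * u) := le_oneSubConj_add_conj hδ ha hu
    _ ≤ star (x - x * u) * (x - x * u) + oneSubConj u e +
        ((1 + δ⁻¹) • (u * a * u) - star κ * κ + star (v * κ) * (v * κ)) := by
        refine add_le_add hosc ?_
        rw [sub_add, le_sub_self_iff]
        exact sub_nonpos.2 hκv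
    _ = _ := by
        simp only [star_add, star_mul (star _) (v * κ), star_star, add_mul, mul_add]
        abel

lemma IsApproximateUnitOf.eventually_exists_le (hF : IsApproximateUnitOf F (idealGen {p}))
    (hp : IsProjection p) (hpa : IsAbsorbing p) (hδ : 0 < δ) (ha : 0 ≤ a)
    (hax : (1 + δ) • a ≤ star x * x + e) (hvp : v * p = v) (hv : p ≤ star v * v) (hτ : 0 < τ) :
    ∃ R, ∀ᶠ u in F, ∃ κ E, ‖κ‖ ≤ R ∧ ‖E‖ ≤ ‖oneSubConj u e‖ + τ ∧
      a ≤ star (x - x * u + v * κ) * (x - x * u + v * κ) + E := by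
  have hK := isIdeal_idealGen {p}
  have hvK : v ∈ idealGen {p} := hvp ▸ hK.mul_mem_left v (mem_idealGen_self p)
  have hc : 0 ≤ 1 + δ⁻¹ := by positivity
  refine ⟨√((1 + δ⁻¹) * ‖a‖ + τ / 2), ?_⟩
  filter_upwards [hF.eventually, hF.eventually_norm_star_sub_mul_le hK hvK x
    (show 0 < τ / 4 by positivity) √((1 + δ⁻¹) * ‖a‖ + τ / 2)] with u ⟨huK, hu, hu1⟩ hcross
  have hus : IsSelfAdjoint u := .of_nonneg hu
  obtain ⟨κ, hpκ, hκ⟩ := hpa.exists_norm_sub_star_mul_self_le hp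
    (g := (1 + δ⁻¹) • (u * a * u)) (smul_nonneg hc (hus.conjugate_nonneg ha))
    (hK.real_smul_mem _ (hK.mul_mem_left _ huK)) (half_pos hτ)
  have huau : ‖u * a * u‖ ≤ ‖a‖ :=
    (norm_mul₃_le ..).trans <| mul_le_of_le_one_right (by positivity) hu1 |>.trans <|
      mul_le_of_le_one_left (norm_nonneg _) hu1
  have hκR : ‖κ‖ ≤ √((1 + δ⁻¹) * ‖a‖ + τ / 2) := by
    refine Real.le_sqrt_of_sq_le ?_
    rw [sq, ← CStarRing.norm_star_mul_self]
    calc ‖star κ * κ‖ ≤ ‖(1 + δ⁻¹) • (u * a * u)‖ + ‖(1 + δ⁻¹) • (u * a * u) - star κ * κ‖ :=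
          norm_le_insert _ _
      _ ≤ (1 + δ⁻¹) * ‖a‖ + τ / 2 := by
          rw [norm_smul, Real.norm_of_nonneg hc]
          gcongr
  refine ⟨κ, _, hκR, ?_, le_star_mul_self_add_of_le hδ ha hus hax hpκ hv⟩
  have hκcross := hcross κ hκR
  calc _ ≤ ‖oneSubConj u e‖ + ‖(1 + δ⁻¹) • (u * a * u) - star κ * κ‖ +
        (‖star (x - x * u) * (v * κ)‖ + ‖star (star (x - x * u) * (v * κ))‖) :=
        (norm_sub_le _ _).trans (add_le_add (norm_add_le _ _) (norm_add_le _ _))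
    _ ≤ ‖oneSubConj u e‖ + τ := by rw [norm_star]; linarith

lemma SeparatedModulo.exists_smul (hK : IsIdeal K) (h : SeparatedModulo ε K a b) :
    ∃ δ > 0, SeparatedModulo (ε - δ) K ((1 + δ) • a) ((1 + δ) • b) := by
  obtain ⟨c, d, e, f, he, hf, hcd, hac, hbd⟩ := h
  obtain ⟨δ, ⟨⟨he, hf⟩, hcd⟩, hδ : 0 < δ⟩ := ((((hK.eventually_smul_mem_thickening he).and
    (hK.eventually_smul_mem_thickening hf)).and
    (hK.eventually_smul_mem_thickening hcd)).filter_mono nhdsWithin_le_nhds |>.and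
    (self_mem_nhdsWithin (s := Set.Ioi 0))).exists
  set s := √(1 + δ)
  have hs : s * s = 1 + δ := Real.mul_self_sqrt (by positivity)
  have hs0 : s ≠ 0 := (Real.sqrt_pos.2 (by positivity)).ne'
  have hscale (g c h d : C) : star ((1 + δ) • g * s⁻¹ • c) * ((1 + δ) • h * s⁻¹ • d) =
      (1 + δ) • (star (g * c) * (h * d)) := by
    have hsδ : (1 + δ) * s⁻¹ = s := by rw [← hs, mul_assoc, mul_inv_cancel₀ hs0, mul_one]
    rw [smul_mul_smul_comm, smul_mul_smul_comm, hsδ, star_smul, star_trivial, smul_mul_smul_comm,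
      hs]
  have hdom {g c e : C} (h : g ≤ star (g * c) * (g * c) + e) :
      (1 + δ) • g ≤ star ((1 + δ) • g * s⁻¹ • c) * ((1 + δ) • g * s⁻¹ • c) + (1 + δ) • e := by
    rw [hscale, ← smul_add]
    exact smul_le_smul_of_nonneg_left h (by positivity)
  exact ⟨δ, hδ, s⁻¹ • c, s⁻¹ • d, _, _, he, hf, by rwa [hscale], hdom hac, hdom hbd⟩

lemma HasAbsorbingProjections.exists_separatedModulo_zero (hC : HasAbsorbingProjections C)
    (ha : 0 ≤ a) (hb : 0 ≤ b) (hab : a * b ≠ 0) :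
    ∃ K, IsIdeal K ∧ ¬ K ⊆ {0} ∧
      ∀ ε, SeparatedModulo ε K a b → SeparatedModulo ε {0} a b := by
  obtain ⟨p, v, w, hp0, hp, hpa, hvp, hwp, hv, hw, hvw⟩ := hC.exists_orthogonal ha hb hab
  have hK := isIdeal_idealGen {p}
  have hpK : p ∈ idealGen {p} := mem_idealGen_self p
  refine ⟨idealGen {p}, hK, fun h => hp0 (h hpK), fun ε hsep => ?_⟩
  obtain ⟨δ, hδ, c, d, e, f, he, hf, hcd, hac, hbd⟩ := hsep.exists_smul hK
  obtain ⟨F, hF⟩ := hK.exists_isApproximateUnitOf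
  have := hF.neBot
  obtain ⟨R, hR⟩ := hF.eventually_exists_le hp hpa hδ ha hac hvp hv hδ
  obtain ⟨S, hS⟩ := hF.eventually_exists_le hp hpa hδ hb hbd hwp hw hδ
  have hcross := hF.eventually_norm_star_mul_le hK (hvp ▸ hK.mul_mem_left _ hpK)
    (hwp ▸ hK.mul_mem_left _ hpK) hvw ((1 + δ) • a * c) ((1 + δ) • b * d) hδ (max R S)
  obtain ⟨u, ⟨κ, E, hκ, hE, hle⟩, ⟨l, E', hl, hE', hle'⟩, hcross, hue, huf, hucd⟩ := (hR.and <|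
    hS.and <| hcross.and <| (hF.eventually_norm_oneSubConj_lt he).and <|
      (hF.eventually_norm_oneSubConj_lt hf).and (hF.eventually_norm_oneSubConj_lt hcd)).exists
  have hcross := hcross κ l (hκ.trans (le_max_left R S)) (hl.trans (le_max_right R S))
  have hfactor (g c v κ : C) : g * ((1 + δ) • (c - c * u) + v * κ) =
      (1 + δ) • g * c - (1 + δ) • g * c * u + g * v * κ := by
    simp only [mul_add, mul_sub, smul_sub, mul_smul_comm, smul_mul_assoc, mul_assoc]
  simp only [SeparatedModulo, Metric.thickening_singleton, mem_ball_zero_iff]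
  refine ⟨(1 + δ) • (c - c * u) + v * κ, (1 + δ) • (d - d * u) + w * l, E, E', by linarith,
    by linarith, ?_⟩
  simp only [hfactor]
  exact ⟨by linarith, hle, hle'⟩

/-- A maximal ideal modulo which `a` and `b` cannot be separated up to `ε` would have a quotient
in which the extension step applies. -/
lemma stronglyPurelyInfinite_of_forall_hasAbsorbingProjections
    (hC : ∀ (K : Set C) (hK : IsIdeal K), HasAbsorbingProjections hK.Quotient) :
    StronglyPurelyInfinite C := by
  refine .of_separatedModulo_zero fun a b ha hb ε hε => ?_
  by_contra hsep
  obtain ⟨K, -, ⟨hK, hKsep⟩, hmax⟩ := zorn_subset_nonempty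
    {K : Set C | IsIdeal K ∧ ¬ SeparatedModulo ε K a b} (fun S hS hchain hne => by
      refine ⟨closure (⋃₀ S), ⟨IsIdeal.closure_sUnion_of_isChain hne hchain fun K hK => (hS hK).1,
        fun h => ?_⟩, fun K hK => (Set.subset_sUnion_of_mem hK).trans subset_closure⟩
      obtain ⟨K, hK, hsepK⟩ := h.exists_of_isChain hchain
      exact (hS hK).2 hsepK) {0} ⟨.singleton_zero, hsep⟩
  have hker : hK.mk ⁻¹' {0} = K := Set.ext fun _ => hK.mk_eq_zero_iff
  rw [← hker, separatedModulo_preimage_mk_iff hK] at hKsep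
  have ha' := map_nonneg hK.mk ha
  have hb' := map_nonneg hK.mk hb
  by_cases hab : hK.mk a * hK.mk b = 0
  · exact hKsep (separatedModulo_zero_of_mul_eq_zero ha' hb' hab hε)
  · obtain ⟨M, hM, hM0, hstep⟩ := (hC K hK).exists_separatedModulo_zero ha' hb' hab
    have hMsep : ¬ SeparatedModulo ε (hK.mk ⁻¹' M) a b := fun h =>
      hKsep (hstep ε ((separatedModulo_preimage_mk_iff hK).1 h))
    have hMK := hmax ⟨IsIdeal.preimage_mk hM, hMsep⟩ (IsIdeal.subset_preimage_mk hM)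
    refine hM0 fun m hm => ?_
    obtain ⟨x, rfl⟩ := hK.mk_surjective m
    exact hK.mk_eq_zero_iff.2 (hMK hm)

end ExtensionStep

section PurelyInfinite

variable {C : Type*} [NonUnitalCStarAlgebra C] {a b c : C}

lemma doublyCuntzBelow_add_of_mul_eq_zero (hb : IsSelfAdjoint b) (hc : IsSelfAdjoint c)
    (hbc : b * c = 0) (hab : CuntzBelow a (b * b * b)) (hac : CuntzBelow a (c * c * c)) :
    DoublyCuntzBelow a (b + c) := by
  have hcb : c * b = 0 := by
    simpa only [star_mul, star_zero, hb.star_eq, hc.star_eq] using congr(star $hbc)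
  rw [doublyCuntzBelow_iff]
  intro ε hε
  obtain ⟨x, hx⟩ := hab ε hε
  obtain ⟨y, hy⟩ := hac ε hε
  have hbx : star (b * x) * (b + c) * (b * x) = star x * (b * b * b) * x := by
    simp only [star_mul, hb.star_eq, mul_assoc, mul_add, add_mul, ← mul_assoc c b x, hcb,
      zero_mul, mul_zero, add_zero]
  have hcy : star (c * y) * (b + c) * (c * y) = star y * (c * c * c) * y := by
    simp only [star_mul, hc.star_eq, mul_assoc, mul_add, add_mul, ← mul_assoc b c y, hbc,
      zero_mul, mul_zero, zero_add]
  have hbxcy : star (b * x) * (b + c) * (c * y) = 0 := by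
    simp only [star_mul, hb.star_eq, mul_assoc, mul_add, ← mul_assoc b c, hbc, zero_mul,
      mul_zero, add_zero]
  exact ⟨b * x, c * y, by rwa [hbx], by rwa [hcy], by rwa [hbxcy, norm_zero]⟩

lemma mem_idealGen_cube (hb : IsSelfAdjoint b) : b ∈ idealGen {b * b * b} := by
  have hI := isIdeal_idealGen {b * b * b}
  refine hI.mem_of_star_mul_self_mem (hI.mem_of_star_mul_self_mem ?_)
  have hcube : star (star b * b) * (star b * b) = b * (b * b * b) := by
    simp only [star_mul, hb.star_eq, mul_assoc]
  exact hcube ▸ hI.mul_mem_left b (mem_idealGen_self _)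

lemma IsProjection.mk {p : C} {K : Set C} (hK : IsIdeal K) (hp : IsProjection p) :
    IsProjection (hK.mk p) :=
  ⟨by rw [← map_star, hp.1], by rw [← map_mul, hp.2]⟩

variable [PartialOrder C]

lemma IdealProperty.quotient (h : IdealProperty C) {K : Set C} (hK : IsIdeal K) :
    IdealProperty hK.Quotient := fun _ _ h₁ h₂ hp =>
  hK.mk_surjective.preimage_injective <|
    h _ _ (IsIdeal.preimage_mk h₁) (IsIdeal.preimage_mk h₂) fun _ hpr => hp _ (hpr.mk hK)

lemma PurelyInfinite.cuntzBelow (h : PurelyInfinite C) (ha : 0 ≤ a) (hb : 0 ≤ b)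
    (hab : a ∈ idealGen {b}) : CuntzBelow a b := by
  rcases eq_or_ne a 0 with rfl | ha0
  · exact cuntzBelow_zero b
  refine (h.2 a b ha ha0 hb ?_).2 hab
  rintro rfl
  exact ha0 (idealGen_singleton_subset .singleton_zero rfl hab)

variable [StarOrderedRing C]

lemma PurelyInfinite.doublyCuntzBelow_add (h : PurelyInfinite C) (ha : 0 ≤ a) (hb : 0 ≤ b)
    (hc : 0 ≤ c) (hbc : b * c = 0) (hab : a ∈ idealGen {b}) (hac : a ∈ idealGen {c}) :
    DoublyCuntzBelow a (b + c) := by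
  have hcube {d : C} (hd : 0 ≤ d) (had : a ∈ idealGen {d}) : CuntzBelow a (d * d * d) := by
    have hds := IsSelfAdjoint.of_nonneg hd
    exact h.cuntzBelow ha (hds.conjugate_nonneg hd)
      (idealGen_singleton_subset (isIdeal_idealGen _) (mem_idealGen_cube hds) had)
  exact doublyCuntzBelow_add_of_mul_eq_zero (.of_nonneg hb) (.of_nonneg hc) hbc (hcube hb hab)
    (hcube hc hac)

lemma StronglyPurelyInfinite.purelyInfinite (h : StronglyPurelyInfinite C) : PurelyInfinite C :=
  ⟨h.not_exists_isCharacter, fun _ b ha _ hb _ =>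
    ⟨fun hab => hab.mem_of_mem (isIdeal_idealGen _) (mem_idealGen_self b),
      (ProperlyInfinite.doublyCuntzBelow hb (h b b hb hb)).cuntzBelow_of_mem_idealGen hb ha⟩⟩

lemma PurelyInfinite.quotient (h : PurelyInfinite C) {K : Set C} (hK : IsIdeal K) :
    PurelyInfinite hK.Quotient := by
  refine ⟨fun ⟨φ, hφ⟩ => h.1 ⟨_, hφ.comp_mk⟩, fun a b ha _ hb _ => ⟨fun hab =>
    hab.mem_of_mem (isIdeal_idealGen _) (mem_idealGen_self b), fun hab => ?_⟩⟩
  obtain ⟨y, hy, rfl⟩ := IsIdeal.exists_nonneg_mk_eq hb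
  have hclosed : IsClosed {s : hK.Quotient | CuntzBelow (star s * s) (hK.mk y)} :=
    (isClosed_setOf_cuntzBelow _).preimage (f := fun s => star s * s) (by fun_prop)
  have hsub : closure (hK.mk '' idealGen {y}) ⊆ {s | CuntzBelow (star s * s) (hK.mk y)} := by
    refine closure_minimal ?_ hclosed
    rintro _ ⟨z, hz, rfl⟩
    rw [Set.mem_ofPred_eq, ← map_star, ← map_mul]
    exact (h.cuntzBelow (star_mul_self_nonneg z) hy
      ((isIdeal_idealGen _).mul_mem_left _ hz)).mk hK
  have hsqrt := hsub (IsIdeal.idealGen_mk_subset_closure y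
    ((isIdeal_idealGen _).sqrt_mem ha hab))
  rwa [Set.mem_ofPred_eq, (IsSelfAdjoint.of_nonneg (CFC.sqrt_nonneg a)).star_eq,
    CFC.sqrt_mul_sqrt_self a ha] at hsqrt

end PurelyInfinite

section IdealProperty

variable {C : Type*} [NonUnitalCStarAlgebra C] {K M : Set C} {p : C}

lemma IsProjection.mem_of_norm_sub_lt_one (hp : IsProjection p) (hK : IsIdeal K) {k : C}
    (hk : k ∈ K) (h : ‖p - k‖ < 1) : p ∈ K := by
  have hlt : ‖hK.mk p‖ < 1 := IsIdeal.norm_mk_lt_iff.2 ⟨k, hk, h⟩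
  have hsq : ‖hK.mk p‖ = ‖hK.mk p‖ * ‖hK.mk p‖ := by
    rw [← CStarRing.norm_star_mul_self, (hp.mk hK).1, (hp.mk hK).2]
  rw [← hK.mk_eq_zero_iff, ← norm_eq_zero]
  nlinarith [norm_nonneg (hK.mk p)]

lemma IsProjection.exists_maximal_notMem (hp : IsProjection p) (hp0 : p ≠ 0) :
    ∃ M, Maximal (fun M => IsIdeal M ∧ p ∉ M) M := by
  obtain ⟨M, -, hM⟩ := zorn_subset_nonempty {M : Set C | IsIdeal M ∧ p ∉ M}
    (fun S hS hchain hne => by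
      refine ⟨closure (⋃₀ S), ⟨IsIdeal.closure_sUnion_of_isChain hne hchain fun K hK => (hS hK).1,
        fun hpS => ?_⟩, fun K hK => (Set.subset_sUnion_of_mem hK).trans subset_closure⟩
      obtain ⟨k, ⟨K, hK, hk⟩, hpk⟩ := Metric.mem_closure_iff.1 hpS 1 one_pos
      exact (hS hK).2 (hp.mem_of_norm_sub_lt_one (hS hK).1 hk (by rwa [← dist_eq_norm])))
    {0} ⟨.singleton_zero, hp0⟩
  exact ⟨M, hM⟩

lemma IsIdeal.setOf_forall_mul_mul_mem (hM : IsIdeal M) (c : C) :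
    IsIdeal {z : C | ∀ d, z * d * c ∈ M} := by
  refine .of_mul_mem ?_ (fun d => ?_) (fun x hx y hy d => ?_) (fun s x hx d => ?_)
    (fun x hx e d => ?_) (fun x hx e d => ?_)
  · rw [Set.ofPred_forall]
    exact isClosed_iInter fun d => hM.isClosed.preimage (f := fun z => z * d * c) (by fun_prop)
  · simpa only [zero_mul] using hM.zero_mem
  · simpa only [add_mul] using hM.add_mem (hx d) (hy d)
  · simpa only [smul_mul_assoc] using hM.smul_mem s (hx d)
  · simpa only [mul_assoc] using hM.mul_mem_left e (hx d)
  · simpa only [mul_assoc] using hx (e * d)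

-- Otherwise, applying maximality to the annihilators modulo `M` of `c` and then of `p` gives
-- `p d c ∈ M` for all `d`, so `c* d p ∈ M` for all `d`, and finally `p p p ∈ M`.
lemma IsProjection.exists_mul_mul_notMem_of_maximal (hp : IsProjection p)
    (hM : Maximal (fun M => IsIdeal M ∧ p ∉ M) M) {b c : C} (hb : b ∉ M) (hc : c ∉ M) :
    ∃ d, b * d * c ∉ M := by
  obtain ⟨⟨hMI, hpM⟩, hmax⟩ := hM
  have hmem {c z : C} (hz : ∀ d, z * d * c ∈ M) (hzM : z ∉ M) : ∀ d, p * d * c ∈ M := by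
    by_contra hpc
    exact hzM (hmax ⟨hMI.setOf_forall_mul_mul_mem c, hpc⟩
      (fun w hw d => hMI.mul_mem_right c (hMI.mul_mem_right d hw)) hz)
  by_contra! hbc
  have hcp (d : C) : star c * d * p ∈ M := by
    simpa only [star_mul, star_star, hp.1, mul_assoc] using
      hMI.star_mem (hmem hbc hb (star d))
  have hcM : star c ∉ M := fun h => hc (star_star c ▸ hMI.star_mem h)
  exact hpM (by simpa only [hp.2] using hmem hcp hcM p)

variable [PartialOrder C]

lemma IdealProperty.exists_isProjection_of_not_subset (h : IdealProperty C) {J₁ J₂ : Set C}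
    (h₁ : IsIdeal J₁) (h₂ : IsIdeal J₂) (hJ : ¬ J₁ ⊆ J₂) :
    ∃ p, IsProjection p ∧ p ∈ J₁ ∧ p ∉ J₂ := by
  contrapose! hJ
  rw [← Set.inter_eq_left]
  exact (h J₁ (J₁ ∩ J₂) h₁ (h₁.inter h₂) fun p hp =>
    ⟨fun hp₁ => ⟨hp₁, hJ p hp hp₁⟩, fun hp₁ => hp₁.1⟩).symm

lemma idealProperty_of_forall_exists_isProjection (h : ∀ J₁ J₂ : Set C, IsIdeal J₁ → IsIdeal J₂ →
    ¬ J₁ ⊆ J₂ → ∃ p, IsProjection p ∧ p ∈ J₁ ∧ p ∉ J₂) : IdealProperty C := by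
  have hsub {J₁ J₂ : Set C} (h₁ : IsIdeal J₁) (h₂ : IsIdeal J₂)
      (hp : ∀ p, IsProjection p → p ∈ J₁ → p ∈ J₂) : J₁ ⊆ J₂ := by
    by_contra hJ
    obtain ⟨p, hpr, hp₁, hp₂⟩ := h J₁ J₂ h₁ h₂ hJ
    exact hp₂ (hp p hpr hp₁)
  exact fun J₁ J₂ h₁ h₂ hp => (hsub h₁ h₂ fun p hpr => (hp p hpr).1).antisymm
    (hsub h₂ h₁ fun p hpr => (hp p hpr).2)

variable [StarOrderedRing C]

lemma IsProjection.exists_mul_self_eq_zero_of_maximal (hp : IsProjection p)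
    (hC : ¬ ∃ φ : C →ₗ[ℂ] ℂ, IsCharacter φ) (hM : Maximal (fun M => IsIdeal M ∧ p ∉ M) M) :
    ∃ x ∈ idealGen {p}, x * x = 0 ∧ x ∉ M := by
  have hpI := isIdeal_idealGen {p}
  obtain ⟨b, hbp, c, -, hb, hc, hbc, hbM, hcM⟩ := exists_mul_eq_zero_of_not_subset hC hpI
    hM.prop.1 fun h => hM.prop.2 (h (mem_idealGen_self p))
  obtain ⟨d, hd⟩ := hp.exists_mul_mul_notMem_of_maximal hM hbM hcM
  have hcb : c * b = 0 := by
    simpa only [star_mul, star_zero, (IsSelfAdjoint.of_nonneg hb).star_eq,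
      (IsSelfAdjoint.of_nonneg hc).star_eq] using congr(star $hbc)
  refine ⟨b * d * c, hpI.mul_mem_right c (hpI.mul_mem_right d hbp), ?_, hd⟩
  simp only [mul_assoc, ← mul_assoc c b, hcb, zero_mul, mul_zero]

-- For square-zero `x`, the orthogonal elements `x* x` and `x x*` generate the same ideal, so their
-- sum dominates two copies of anything in that ideal.
lemma PurelyInfinite.doublyCuntzBelow_of_mul_self_eq_zero (hC : PurelyInfinite C) {x e : C}
    (hx : x * x = 0) (he : 0 ≤ e) (hex : e ∈ idealGen {star x * x}) :
    DoublyCuntzBelow e (star x * x + x * star x) := by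
  have hI := isIdeal_idealGen {x * star x}
  have hstar : star x ∈ idealGen {x * star x} :=
    hI.mem_of_star_mul_self_mem (by rw [star_star]; exact mem_idealGen_self _)
  refine hC.doublyCuntzBelow_add he (star_mul_self_nonneg x) (mul_star_self_nonneg x) ?_ hex
    (idealGen_singleton_subset hI (hI.mul_mem_right x hstar) hex)
  simp only [mul_assoc, ← mul_assoc x x, hx, zero_mul, mul_zero]

lemma PurelyInfinite.hasAbsorbingProjections (hC : PurelyInfinite C) (hip : IdealProperty C) :
    HasAbsorbingProjections C := by
  intro h hh hh0
  have hhI := isIdeal_idealGen {h}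
  obtain ⟨p, hp, hph, hp0⟩ := hip.exists_isProjection_of_not_subset hhI .singleton_zero
    fun hs => hh0 (hs (mem_idealGen_self h))
  obtain ⟨M, hM⟩ := hp.exists_maximal_notMem hp0
  obtain ⟨x, hxp, hxx, hxM⟩ := hp.exists_mul_self_eq_zero_of_maximal hC.1 hM
  have hxh : x ∈ idealGen {h} := idealGen_singleton_subset hhI hph hxp
  have hxI := isIdeal_idealGen {star x * x}
  obtain ⟨e, he, hex, heM⟩ := hip.exists_isProjection_of_not_subset hxI hM.prop.1
    fun hs => hxM (hs (hxI.mem_of_star_mul_self_mem (mem_idealGen_self _)))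
  have hsum : CuntzBelow (star x * x + x * star x) h :=
    hC.cuntzBelow (add_nonneg (star_mul_self_nonneg x) (mul_star_self_nonneg x)) hh
      (hhI.add_mem (hhI.mul_mem_left _ hxh) (hhI.mul_mem_right _ hxh))
  refine ⟨e, ?_, he, fun g hg hge => hC.cuntzBelow hg he.nonneg hge,
    (hC.doublyCuntzBelow_of_mul_self_eq_zero hxx he.nonneg hex).trans hsum⟩
  rintro rfl
  exact heM hM.prop.1.zero_mem

-- In an ideal `L ⊆ J₁` minimal subject to `L ⊄ J₂`, every element outside `J₂` generates `L`.
lemma PurelyInfinite.idealProperty_of_finite (hC : PurelyInfinite C)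
    (hfin : {J : Set C | IsIdeal J}.Finite) : IdealProperty C := by
  refine idealProperty_of_forall_exists_isProjection fun J₁ J₂ h₁ h₂ hJ => ?_
  obtain ⟨L, ⟨hL, hL₁, hL₂⟩, hmin⟩ := (hfin.subset
    (t := {L : Set C | IsIdeal L ∧ L ⊆ J₁ ∧ ¬ L ⊆ J₂}) fun L hL => hL.1).exists_minimal
      ⟨J₁, h₁, subset_rfl, hJ⟩
  have hgen {z : C} (hz : z ∈ L) (hz₂ : z ∉ J₂) : L ⊆ idealGen {z} := by
    have hzL := idealGen_singleton_subset hL hz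
    exact hmin ⟨isIdeal_idealGen _, hzL.trans hL₁, fun h => hz₂ (h (mem_idealGen_self z))⟩ hzL
  obtain ⟨b, hbL, c, hcL, hb, hc, hbc, hb₂, hc₂⟩ :=
    exists_mul_eq_zero_of_not_subset hC.1 hL h₂ hL₂
  obtain ⟨κ, hκ, hκ₂⟩ := h₂.exists_cutDown_notMem hb hb₂
  have hsum : DoublyCuntzBelow b (b + c) :=
    hC.doublyCuntzBelow_add hb hb hc hbc (mem_idealGen_self b) (hgen hcL hc₂ hbL)
  have hcut : CuntzBelow (b + c) (cutDown κ b) := hC.cuntzBelow (add_nonneg hb hc)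
    (cutDown_nonneg κ b) (hgen (hL.cutDown_mem hbL κ) hκ₂ (hL.add_mem hbL hcL))
  obtain ⟨p, hp, hpb, hκp⟩ := exists_isProjection_of_doublyCuntzBelow_cutDown hb hκ
    (hsum.trans hcut)
  exact ⟨p, hp, hL₁ (idealGen_singleton_subset hL hbL hpb),
    fun hp₂ => hκ₂ (hκp.mem_of_mem h₂ hp₂)⟩

end IdealProperty

section SupportingFamilies

variable {C : Type*} [NonUnitalCStarAlgebra C] {A F K : Set C} {a b : C}

lemma cuntzBelow_mk_iff (hK : IsIdeal K) : CuntzBelow (hK.mk a) (hK.mk b) ↔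
    ∀ ε : ℝ, 0 < ε → ∃ x : C, Metric.infDist (a - star x * b * x) K < ε := by
  simp only [CuntzBelow, hK.mk_surjective.exists, ← IsIdeal.norm_mk (hK := hK), map_sub, map_mul,
    map_star]

lemma mem_of_cuntzBelow_mk {hK : IsIdeal K} (h : CuntzBelow (hK.mk a) (hK.mk b)) {L : Set C}
    (hL : IsIdeal L) (hKL : K ⊆ L) (hb : b ∈ L) : a ∈ L := by
  refine hL.mem_of_forall_norm_sub_lt fun ε hε => ?_
  obtain ⟨x, hx⟩ := (cuntzBelow_mk_iff hK).1 h ε hε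
  obtain ⟨k, hk, hxk⟩ := (Metric.infDist_lt_iff hK.nonempty).1 hx
  exact ⟨star x * b * x + k, hL.add_mem (hL.mul_mem_right x (hL.mul_mem_left _ hb)) (hKL hk),
    by rwa [dist_eq_norm, sub_sub] at hxk⟩

lemma IsIdeal.isIdealIn_inter (hK : IsIdeal K) (hA : IsSubCStar A) : IsIdealIn A (K ∩ A) := by
  obtain ⟨hclosed, hzero, hadd, hsmul, hmul, -⟩ := hA
  exact ⟨Set.inter_subset_right, hK.isClosed.inter hclosed, ⟨hK.zero_mem, hzero⟩,
    fun x hx y hy => ⟨hK.add_mem hx.1 hy.1, hadd x hx.2 y hy.2⟩,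
    fun c x hx => ⟨hK.smul_mem c hx.1, hsmul c x hx.2⟩,
    fun x hx c hc => ⟨⟨hK.mul_mem_left c hx.1, hmul c hc x hx.2⟩,
      ⟨hK.mul_mem_right c hx.1, hmul x hx.2 c hc⟩⟩⟩

variable [PartialOrder C]

lemma ResiduallySupports.exists_cuntzBelow_mk (hF : ResiduallySupports F) (hK : IsIdeal K)
    (hb : 0 ≤ b) (hbK : b ∉ K) : ∃ f ∈ F, f ∉ K ∧ CuntzBelow (hK.mk f) (hK.mk b) := by
  obtain ⟨f, hf, hfK, hfb⟩ := hF K hK b (Set.mem_univ b) hb hbK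
  simp only [Set.mem_univ, true_and] at hfb
  exact ⟨f, hf, hfK, (cuntzBelow_mk_iff hK).2 hfb⟩

lemma ResiduallySupports.of_residuallySupportsIn (hA : IsSubCStar A)
    (hApos : ResiduallySupports {a : C | a ∈ A ∧ 0 ≤ a}) (hFA : F ⊆ A)
    (hF : ResiduallySupportsIn A F) : ResiduallySupports F := by
  intro K (hK : IsIdeal K) b _ hb hbK
  obtain ⟨a, ⟨haA, ha⟩, haK, hab⟩ := hApos.exists_cuntzBelow_mk hK hb hbK
  obtain ⟨f, hf, hfK, hfa⟩ := hF (K ∩ A) (hK.isIdealIn_inter hA) a haA ha fun h => haK h.1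
  have hfa : CuntzBelow (hK.mk f) (hK.mk a) :=
    (cuntzBelow_mk_iff hK).2 fun ε hε => by
      obtain ⟨x, -, hx⟩ := hfa ε hε
      exact ⟨x, (Metric.infDist_le_infDist_of_subset Set.inter_subset_left
        ⟨0, hK.zero_mem, hA.2.1⟩).trans_lt hx⟩
  have hfb := (cuntzBelow_mk_iff hK).1 (hfa.trans hab)
  exact ⟨f, hf, fun h => hfK ⟨h, hFA hf⟩, by simpa only [Set.mem_univ, true_and] using hfb⟩

variable [StarOrderedRing C]

lemma ResiduallySupports.supports_image_mk (hF : ResiduallySupports F) (hK : IsIdeal K) :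
    Supports (hK.mk '' F) := by
  intro z hz hz0
  obtain ⟨b, hb, rfl⟩ := IsIdeal.exists_nonneg_mk_eq hz
  obtain ⟨f, hf, hfK, hfb⟩ := hF.exists_cuntzBelow_mk hK hb (mt IsIdeal.mk_eq_zero_iff.2 hz0)
  exact ⟨hK.mk f, ⟨f, hf, rfl⟩, mt IsIdeal.mk_eq_zero_iff.1 hfK, hfb⟩

lemma ResiduallySupports.separatesIdeals (hF : ResiduallySupports F) (hFA : F ⊆ A) :
    SeparatesIdeals A := by
  have hsub {J₁ J₂ : Set C} (h₁ : IsIdeal J₁) (h₂ : IsIdeal J₂) (h : J₁ ∩ A ⊆ J₂) :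
      J₁ ⊆ J₂ := by
    intro x hx
    by_contra hx₂
    obtain ⟨f, hf, hf₁₂, hfx⟩ := hF.exists_cuntzBelow_mk (h₁.inter h₂) (star_mul_self_nonneg x)
      fun hmem => hx₂ (h₂.mem_of_star_mul_self_mem hmem.2)
    have hf₁ : f ∈ J₁ := mem_of_cuntzBelow_mk hfx h₁ Set.inter_subset_left (h₁.mul_mem_left _ hx)
    exact hf₁₂ ⟨hf₁, h ⟨hf₁, hFA hf⟩⟩
  intro J₁ J₂ h₁ h₂ hJ
  exact (hsub h₁ h₂ (hJ ▸ Set.inter_subset_left)).antisymm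
    (hsub h₂ h₁ (hJ ▸ Set.inter_subset_left))

end SupportingFamilies

section DoublyInfiniteFamilies

variable {C : Type*} [NonUnitalCStarAlgebra C] {A F K : Set C} {a f : C}

lemma IsIdeal.finite_setOf_isIdeal_quotient (hK : IsIdeal K)
    (hfin : {J : Set C | IsIdeal J}.Finite) : {J : Set hK.Quotient | IsIdeal J}.Finite :=
  Set.Finite.of_injOn (f := (hK.mk ⁻¹' ·)) (t := {J | IsIdeal J})
    (fun _ hJ => IsIdeal.preimage_mk hJ) hK.mk_surjective.preimage_injective.injOn hfin

lemma exists_isProjection_mem_idealGen_notMem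
    (hproj : ∀ I₁ I₂ : Set C, IsRestricted A I₁ → IsRestricted A I₂ →
      (∀ p ∈ F, IsProjection p → (p ∈ I₁ ↔ p ∈ I₂)) → I₁ = I₂)
    (hK : IsIdeal K) (hfA : f ∈ A) (hfK : f ∉ K) :
    ∃ p ∈ F, IsProjection p ∧ p ∈ idealGen {f} ∧ p ∉ K := by
  have hf := isIdeal_idealGen {f}
  contrapose! hfK
  have hinter : idealGen {f} ∩ A = idealGen {f} ∩ K ∩ A :=
    hproj _ _ ⟨_, hf, rfl⟩ ⟨_, hf.inter hK, rfl⟩ fun p hpF hp =>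
      ⟨fun h => ⟨⟨h.1, hfK p hpF hp h.1⟩, h.2⟩, fun h => ⟨h.1.1, h.2⟩⟩
  have hmem : f ∈ idealGen {f} ∩ A := ⟨mem_idealGen_self f, hfA⟩
  rw [hinter] at hmem
  exact hmem.1.2

lemma SeparatesIdeals.finite_setOf_isIdeal (hA : SeparatesIdeals A)
    (hfin : {I : Set C | IsRestricted A I}.Finite) : {J : Set C | IsIdeal J}.Finite :=
  Set.Finite.of_injOn (f := (· ∩ A)) (t := {I | IsRestricted A I}) (fun J hJ => ⟨J, hJ, rfl⟩)
    (fun _ h₁ _ h₂ => hA _ _ h₁ h₂) hfin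

variable [PartialOrder C] [StarOrderedRing C]

lemma DoublyCuntzBelow.isAbsorbing (h : DoublyCuntzBelow a a) (ha : 0 ≤ a) : IsAbsorbing a :=
  fun _ hg hga => h.cuntzBelow_of_mem_idealGen ha hg hga

lemma HasAbsorbingProjections.of_supports_of_isProjection (hF : Supports F)
    (hF₀ : ∀ f ∈ F, 0 ≤ f) (hFF : ∀ f ∈ F, DoublyCuntzBelow f f)
    (hproj : ∀ f ∈ F, f ≠ 0 → ∃ p ∈ F, p ≠ 0 ∧ IsProjection p ∧ p ∈ idealGen {f}) :
    HasAbsorbingProjections C := by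
  intro h hh hh0
  obtain ⟨f, hf, hf0, hfh⟩ := hF h hh hh0
  obtain ⟨p, hpF, hp0, hp, hpf⟩ := hproj f hf hf0
  exact ⟨p, hp0, hp, (hFF p hpF).isAbsorbing hp.nonneg,
    (hFF p hpF).trans (((hFF f hf).isAbsorbing (hF₀ f hf) p hp.nonneg hpf).trans hfh)⟩

-- If `f ∈ F` generates a minimal ideal among the members of `F` below `h`, then any `f' ∈ F` below
-- a cut-down of `f` generates the same ideal, so two copies of `f` fit below that cut-down.
lemma HasAbsorbingProjections.of_supports_of_finite (hF : Supports F) (hF₀ : ∀ f ∈ F, 0 ≤ f)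
    (hFF : ∀ f ∈ F, DoublyCuntzBelow f f) (hfin : {J : Set C | IsIdeal J}.Finite) :
    HasAbsorbingProjections C := by
  intro h hh hh0
  have hne : {J : Set C | ∃ f ∈ F, f ≠ 0 ∧ CuntzBelow f h ∧ J = idealGen {f}}.Nonempty := by
    obtain ⟨f, hf, hf0, hfh⟩ := hF h hh hh0
    exact ⟨_, f, hf, hf0, hfh, rfl⟩
  obtain ⟨_, ⟨f, hf, hf0, hfh, rfl⟩, hmin⟩ := (hfin.subset (by
    rintro _ ⟨f, -, -, -, rfl⟩; exact isIdeal_idealGen _)).exists_minimal hne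
  have hfI := isIdeal_idealGen {f}
  obtain ⟨κ, hκ, hκ0⟩ := IsIdeal.singleton_zero.exists_cutDown_notMem (hF₀ f hf) hf0
  obtain ⟨f', hf', hf'0, hf'κ⟩ := hF _ (cutDown_nonneg κ f) hκ0
  have hκf : CuntzBelow (cutDown κ f) f :=
    cuntzBelow_of_le (cutDown_nonneg κ f) (cutDown_le hκ.le (hF₀ f hf))
  have hf'f : CuntzBelow f' f := hf'κ.trans hκf
  have hff'I : f ∈ idealGen {f'} := hmin ⟨f', hf', hf'0, hf'f.trans hfh, rfl⟩
    (idealGen_singleton_subset hfI (hf'f.mem_of_mem hfI (mem_idealGen_self f)))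
    (mem_idealGen_self f)
  have hff' : CuntzBelow f f' := (hFF f' hf').isAbsorbing (hF₀ f' hf') f (hF₀ f hf) hff'I
  obtain ⟨p, hp, hpf, hκp⟩ := exists_isProjection_of_doublyCuntzBelow_cutDown (hF₀ f hf) hκ
    (hff'.trans_doubly ((hFF f' hf').trans hf'κ))
  have hfabs := (hFF f hf).isAbsorbing (hF₀ f hf)
  refine ⟨p, ?_, hp, fun g hg hgp => ?_,
    (hfabs p hp.nonneg hpf).trans_doubly ((hFF f hf).trans hfh)⟩
  · rintro rfl
    exact hκ0 (hκp.mem_of_mem .singleton_zero rfl)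
  · exact (hfabs g hg (idealGen_singleton_subset hfI hpf hgp)).trans
      ((hff'.trans hf'κ).trans hκp)

lemma doublyCuntzBelow_self_of_forall_properlyInfinite (hF₀ : ∀ f ∈ F, 0 ≤ f)
    (hF : ∀ f ∈ F, f ≠ 0 → ProperlyInfinite f) : ∀ f ∈ F, DoublyCuntzBelow f f := by
  intro f hf
  rcases eq_or_ne f 0 with rfl | hf0
  · exact subset_closure ⟨0, by simp⟩
  · exact (hF f hf hf0).doublyCuntzBelow (hF₀ f hf)

lemma ResiduallySupports.stronglyPurelyInfinite_of_finite (hF : ResiduallySupports F)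
    (hF₀ : ∀ f ∈ F, 0 ≤ f) (hFF : ∀ f ∈ F, DoublyCuntzBelow f f)
    (hfin : {J : Set C | IsIdeal J}.Finite) : StronglyPurelyInfinite C := by
  refine stronglyPurelyInfinite_of_forall_hasAbsorbingProjections fun K hK =>
    .of_supports_of_finite (hF.supports_image_mk hK) ?_ ?_ (hK.finite_setOf_isIdeal_quotient hfin)
  · exact Set.forall_mem_image.2 fun f hf => map_nonneg hK.mk (hF₀ f hf)
  · exact Set.forall_mem_image.2 fun f hf => (hFF f hf).mk hK

lemma ResiduallySupports.stronglyPurelyInfinite_of_isProjection (hF : ResiduallySupports F)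
    (hF₀ : ∀ f ∈ F, 0 ≤ f) (hFF : ∀ f ∈ F, DoublyCuntzBelow f f)
    (hproj : ∀ K, IsIdeal K → ∀ f ∈ F, f ∉ K →
      ∃ p ∈ F, IsProjection p ∧ p ∈ idealGen {f} ∧ p ∉ K) : StronglyPurelyInfinite C := by
  refine stronglyPurelyInfinite_of_forall_hasAbsorbingProjections fun K hK =>
    .of_supports_of_isProjection (hF.supports_image_mk hK) ?_ ?_ ?_
  · exact Set.forall_mem_image.2 fun f hf => map_nonneg hK.mk (hF₀ f hf)
  · exact Set.forall_mem_image.2 fun f hf => (hFF f hf).mk hK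
  · refine Set.forall_mem_image.2 fun f hf hf0 => ?_
    obtain ⟨p, hpF, hp, hpf, hpK⟩ := hproj K hK f hf (mt IsIdeal.mk_eq_zero_iff.2 hf0)
    exact ⟨hK.mk p, ⟨p, hpF, rfl⟩, mt IsIdeal.mk_eq_zero_iff.1 hpK, hp.mk hK,
      IsIdeal.mk_mem_idealGen hpf⟩

end DoublyInfiniteFamilies

end KM

/-- If `A⁺` residually supports `B`, `F ⊆ A⁺` residually supports the C*-algebra `A`, and
either the set of restricted ideals of `A` is finite or the projections in `F` separate the
restricted ideals of `A`, then: every nonzero element of `F` is properly infinite in `B` ↔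
`B` is purely infinite ↔ `B` is purely infinite with the ideal property ↔ `B` is strongly
purely infinite. -/
theorem stmt0 (A : Set B) (hA : IsSubCStar A)
    (hApos : ResiduallySupports {a : B | a ∈ A ∧ 0 ≤ a})
    (F : Set B) (hFA : F ⊆ {a : B | a ∈ A ∧ 0 ≤ a})
    (hFsupp : ResiduallySupportsIn A F)
    (hsep : {I : Set B | IsRestricted A I}.Finite ∨
      ∀ I₁ I₂ : Set B, IsRestricted A I₁ → IsRestricted A I₂ →
        (∀ p ∈ F, IsProjection p → (p ∈ I₁ ↔ p ∈ I₂)) → I₁ = I₂) :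
    List.TFAE [∀ a ∈ F, a ≠ 0 → ProperlyInfinite a,
      PurelyInfinite B,
      PurelyInfinite B ∧ IdealProperty B,
      StronglyPurelyInfinite B] := by
  have hsepA : SeparatesIdeals A := hApos.separatesIdeals fun a ha => ha.1
  have hF₀ : ∀ f ∈ F, 0 ≤ f := fun f hf => (hFA hf).2
  tfae_have 1 → 4 := fun hpi => by
    have hF := ResiduallySupports.of_residuallySupportsIn hA hApos (fun f hf => (hFA hf).1) hFsupp
    have hFF := doublyCuntzBelow_self_of_forall_properlyInfinite hF₀ hpi
    rcases hsep with hfin | hproj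
    · exact hF.stronglyPurelyInfinite_of_finite hF₀ hFF (hsepA.finite_setOf_isIdeal hfin)
    · exact hF.stronglyPurelyInfinite_of_isProjection hF₀ hFF fun K hK f hf =>
        exists_isProjection_mem_idealGen_notMem hproj hK (hFA hf).1
  tfae_have 4 → 1 := fun h a ha _ => h a a (hF₀ a ha) (hF₀ a ha)
  tfae_have 4 → 2 := StronglyPurelyInfinite.purelyInfinite
  tfae_have 3 → 2 := And.left
  tfae_have 3 → 4 := fun h => stronglyPurelyInfinite_of_forall_hasAbsorbingProjections fun K hK =>
    (h.1.quotient hK).hasAbsorbingProjections (h.2.quotient hK)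
  tfae_have 2 → 3 := fun h => by
    refine ⟨h, hsep.elim (fun hfin => h.idealProperty_of_finite (hsepA.finite_setOf_isIdeal hfin))
      fun hproj J₁ J₂ h₁ h₂ hp => hsepA J₁ J₂ h₁ h₂ ?_⟩
    exact hproj _ _ ⟨J₁, h₁, rfl⟩ ⟨J₂, h₂, rfl⟩ fun p _ hpr => and_congr_left' (hp p hpr)
  tfae_finish
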